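/- arXiv:1505.05626 — 6 statements merged into one kernel-verified Lean document; each statement's English description precedes it below -/
import Mathlib

section
/- Let V be a finite-dimensional complex vector space and W a finite complex reflection subgroup of GL(V). Then the action of W on V^reg is free: if v ∈ V^reg and w ∈ W satisfy w·v = v, then w is the identity. -/
open Module

/-- A complex reflection: an element of `GL(V)` of finite order, not the identity,
whose fixed-point set is a hyperplane (a codimension-one linear subspace). -/
def IsComplexReflection {V : Type*} [AddCommGroup V] [Module ℂ V]
    (s : V ≃ₗ[ℂ] V) : Prop :=
  IsOfFinOrder s ∧ s ≠ 1 ∧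
    finrank ℂ (LinearMap.ker ((s : V →ₗ[ℂ] V) - LinearMap.id)) + 1 = finrank ℂ V

set_option linter.unusedSectionVars false
namespace Stein
open MvPolynomial

section basics
variable {V : Type*} [AddCommGroup V] [Module ℂ V] {n : ℕ} (b : Basis (Fin n) ℂ V)

/-- linear form as a polynomial -/
noncomputable def lin (l : V →ₗ[ℂ] ℂ) : MvPolynomial (Fin n) ℂ := ∑ i, C (l (b i)) * X i

/-- evaluation at a point -/
noncomputable def ev (x : V) : MvPolynomial (Fin n) ℂ →ₐ[ℂ] ℂ := aeval (fun i => b.repr x i)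

/-- substitution -/
noncomputable def sg (g : V →ₗ[ℂ] V) : MvPolynomial (Fin n) ℂ →ₐ[ℂ] MvPolynomial (Fin n) ℂ :=
  aeval (fun i => lin b (b.coord i ∘ₗ g))

lemma ev_lin (l : V →ₗ[ℂ] ℂ) (x : V) : ev b x (lin b l) = l x := by
  conv_rhs => rw [← b.sum_repr x]
  rw [map_sum, lin, map_sum]
  refine Finset.sum_congr rfl fun i _ => ?_
  rw [map_smul, map_mul]
  simp [ev, mul_comm]

lemma ev_X (i : Fin n) (x : V) : ev b x (X i) = b.repr x i := by simp [ev]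

lemma ev_sg (g : V →ₗ[ℂ] V) (x : V) (p : MvPolynomial (Fin n) ℂ) :
    ev b x (sg b g p) = ev b (g x) p := by
  have : (ev b x).comp (sg b g) = ev b (g x) := by
    apply MvPolynomial.algHom_ext
    intro i
    simp only [AlgHom.comp_apply, sg, aeval_X, ev_lin, ev_X]
    simp
  exact DFunLike.congr_fun this p

lemma ev_ext {p q : MvPolynomial (Fin n) ℂ} (h : ∀ x, ev b x p = ev b x q) : p = q := by
  apply MvPolynomial.funext
  intro y
  have := h (b.equivFun.symm y)
  have e : (fun i => b.repr (b.equivFun.symm y) i) = y := by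
    ext i
    rw [← Basis.equivFun_apply, LinearEquiv.apply_symm_apply]
  unfold ev at this
  rw [e] at this
  simpa only [MvPolynomial.aeval_eq_eval] using this

lemma sg_lin (g : V →ₗ[ℂ] V) (l : V →ₗ[ℂ] ℂ) : sg b g (lin b l) = lin b (l ∘ₗ g) := by
  apply ev_ext b; intro x; simp [ev_sg, ev_lin]

lemma lin_smul (c : ℂ) (l : V →ₗ[ℂ] ℂ) : lin b (c • l) = c • lin b l := by
  apply ev_ext b; intro x; simp [ev_lin]

lemma lin_hom (l : V →ₗ[ℂ] ℂ) : (lin b l).IsHomogeneous 1 := by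
  apply IsHomogeneous.sum
  intro i _
  exact isHomogeneous_C_mul_X _ _

lemma lin_ne {l : V →ₗ[ℂ] ℂ} (h : l ≠ 0) : lin b l ≠ 0 := by
  intro h0
  apply h
  ext x
  rw [← ev_lin b, h0]; simp

lemma sg_sg (g h : V →ₗ[ℂ] V) (p : MvPolynomial (Fin n) ℂ) :
    sg b h (sg b g p) = sg b (g ∘ₗ h) p := by
  apply ev_ext b; intro x; simp [ev_sg]

lemma sg_id (p : MvPolynomial (Fin n) ℂ) : sg b LinearMap.id p = p := by
  apply ev_ext b; intro x; simp [ev_sg]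

lemma sg_hom (g : V →ₗ[ℂ] V) {p : MvPolynomial (Fin n) ℂ} {k : ℕ} (h : p.IsHomogeneous k) :
    (sg b g p).IsHomogeneous k := by
  have := h.aeval (fun i => lin b (b.coord i ∘ₗ g)) (n := 1) (fun i => lin_hom b _)
  simpa [sg] using this

lemma hc_sum (p : MvPolynomial (Fin n) ℂ) :
    p = ∑ i ∈ Finset.range (p.totalDegree + 1), homogeneousComponent i p :=
  (sum_homogeneousComponent p).symm

lemma hc_hom {p : MvPolynomial (Fin n) ℂ} {m : ℕ} (h : p.IsHomogeneous m) (k : ℕ) :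
    homogeneousComponent k p = if k = m then p else 0 := by
  rw [homogeneousComponent_of_mem (m := k) (n := m) ((mem_homogeneousSubmodule _ _).2 h)]

lemma hc_big {p : MvPolynomial (Fin n) ℂ} {k : ℕ} (h : k ∉ Finset.range (p.totalDegree + 1)) :
    homogeneousComponent k p = 0 := by
  apply homogeneousComponent_eq_zero
  simp at h; omega

lemma hc_sg (g : V →ₗ[ℂ] V) (p : MvPolynomial (Fin n) ℂ) (k : ℕ) :
    homogeneousComponent k (sg b g p) = sg b g (homogeneousComponent k p) := by
  conv_lhs => rw [hc_sum p]
  simp only [map_sum]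
  rw [Finset.sum_congr rfl (fun i _ =>
    hc_hom (sg_hom b g (homogeneousComponent_isHomogeneous i p)) k)]
  rw [Finset.sum_ite_eq]
  split_ifs with h
  · rfl
  · rw [hc_big h, map_zero]

lemma hc_mul {p : MvPolynomial (Fin n) ℂ} {m : ℕ} (hp : p.IsHomogeneous m)
    (q : MvPolynomial (Fin n) ℂ) (k : ℕ) :
    homogeneousComponent (m + k) (p * q) = p * homogeneousComponent k q := by
  conv_lhs => rw [hc_sum q]
  simp only [Finset.mul_sum, map_sum]
  rw [Finset.sum_congr rfl (fun i _ =>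
    hc_hom (hp.mul (homogeneousComponent_isHomogeneous i q)) (m + k))]
  simp only [add_right_inj]
  rw [Finset.sum_ite_eq]
  split_ifs with h
  · rfl
  · rw [hc_big h, mul_zero]

lemma hc_mul_lt {p : MvPolynomial (Fin n) ℂ} {m : ℕ} (hp : p.IsHomogeneous m)
    (q : MvPolynomial (Fin n) ℂ) (k : ℕ) (hk : k < m) :
    homogeneousComponent k (p * q) = 0 := by
  conv_lhs => rw [hc_sum q]
  simp only [Finset.mul_sum, map_sum]
  rw [Finset.sum_congr rfl (fun i _ =>
    hc_hom (hp.mul (homogeneousComponent_isHomogeneous i q)) k)]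
  apply Finset.sum_eq_zero
  intro i _
  rw [if_neg (by omega)]

lemma deg_sg (g : V →ₗ[ℂ] V) (p : MvPolynomial (Fin n) ℂ) :
    (sg b g p).totalDegree ≤ p.totalDegree := by
  conv_lhs => rw [hc_sum p]
  rw [map_sum]
  apply totalDegree_finsetSum_le
  intro i hi
  refine (sg_hom b g (homogeneousComponent_isHomogeneous i p)).totalDegree_le.trans ?_
  simp at hi; omega

lemma deg_lt {p : MvPolynomial (Fin n) ℂ} {k : ℕ} (h : p.totalDegree ≤ k)
    (h0 : homogeneousComponent k p = 0) : p = 0 ∨ p.totalDegree < k := by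
  rcases h.lt_or_eq with h1 | h1
  · exact Or.inr h1
  · left
    rcases Nat.eq_zero_or_pos k with hk | hk
    · subst hk
      rw [hc_sum p, h1]; simpa using h0
    · exfalso
      have : p.totalDegree ≤ k - 1 := by
        rw [hc_sum p, h1, Finset.sum_range_succ, h0, add_zero]
        apply totalDegree_finsetSum_le
        intro i hi
        refine (homogeneousComponent_isHomogeneous i p).totalDegree_le.trans ?_
        simp at hi; omega
      omega

/-- key divisibility -/
lemma dvd_sub {l : V →ₗ[ℂ] ℂ} {a : V} {g : V →ₗ[ℂ] V} (hg : ∀ x, g x = x + l x • a)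
    (p : MvPolynomial (Fin n) ℂ) : lin b l ∣ p - sg b g p := by
  rw [← Ideal.mem_span_singleton, ← Ideal.Quotient.eq]
  have : (Ideal.Quotient.mkₐ ℂ (Ideal.span {lin b l})) =
      (Ideal.Quotient.mkₐ ℂ (Ideal.span {lin b l})).comp (sg b g) := by
    apply MvPolynomial.algHom_ext
    intro i
    simp only [AlgHom.comp_apply, Ideal.Quotient.mkₐ_eq_mk]
    rw [Ideal.Quotient.eq, Ideal.mem_span_singleton]
    refine ⟨C (- b.coord i a), ?_⟩
    apply ev_ext b
    intro x
    simp [ev_sg, ev_lin, ev_X, hg]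
  exact DFunLike.congr_fun this p

lemma exists_one {l : V →ₗ[ℂ] ℂ} (h : l ≠ 0) : ∃ a, l a = 1 := by
  obtain ⟨x, hx⟩ := DFunLike.ne_iff.1 h
  exact ⟨(l x)⁻¹ • x, by simpa using inv_mul_cancel₀ hx⟩

/-- projection to the kernel -/
noncomputable def prj (l : V →ₗ[ℂ] ℂ) (a : V) : V →ₗ[ℂ] V := LinearMap.id - l.smulRight a

lemma dvd_iff_sg {l : V →ₗ[ℂ] ℂ} {a : V} (ha : l a = 1) (p : MvPolynomial (Fin n) ℂ) :
    lin b l ∣ p ↔ sg b (prj l a) p = 0 := by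
  constructor
  · rintro ⟨q, rfl⟩
    rw [map_mul, sg_lin]
    have : l ∘ₗ prj l a = 0 := by ext x; simp [prj, ha]
    rw [this]; simp [lin]
  · intro h
    have := dvd_sub b (l := l) (a := -a) (g := prj l a) (fun x => by simp [prj, sub_eq_add_neg]) p
    simpa [h] using this

lemma dvd_iff {l : V →ₗ[ℂ] ℂ} (hl : l ≠ 0) (p : MvPolynomial (Fin n) ℂ) :
    lin b l ∣ p ↔ ∀ x, l x = 0 → ev b x p = 0 := by
  constructor
  · rintro ⟨q, rfl⟩ x hx
    simp [ev_lin, hx]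
  · intro h
    obtain ⟨a, ha⟩ := exists_one hl
    rw [dvd_iff_sg b ha]
    apply ev_ext b
    intro x
    rw [ev_sg, map_zero]
    apply h
    simp [prj, ha]

lemma lin_prime {l : V →ₗ[ℂ] ℂ} (hl : l ≠ 0) : Prime (lin b l) := by
  obtain ⟨a, ha⟩ := exists_one hl
  refine ⟨lin_ne b hl, ?_, ?_⟩
  · intro hu
    have : lin b l ∣ 1 := isUnit_iff_dvd_one.1 hu
    rw [dvd_iff_sg b ha] at this
    simp at this
  · intro p q h
    rw [dvd_iff_sg b ha] at h ⊢
    rw [dvd_iff_sg b ha]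
    simpa using h

lemma lin_dvd_lin {l m : V →ₗ[ℂ] ℂ} (hl : l ≠ 0) (hm : m ≠ 0) (h : lin b l ∣ lin b m) :
    LinearMap.ker l = LinearMap.ker m := by
  rw [dvd_iff b hl] at h
  simp only [ev_lin] at h
  obtain ⟨a, ha⟩ := exists_one hl
  have key : ∀ x, m x = l x * m a := by
    intro x
    have := h (x - l x • a) (by simp [ha])
    simpa [sub_eq_zero] using this
  have hma : m a ≠ 0 := by
    intro h0; apply hm; ext x; simp [key x, h0]
  ext x
  simp [key x, hma]

lemma ker_eq_smul {l m : V →ₗ[ℂ] ℂ} (hl : l ≠ 0)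
    (h : LinearMap.ker l = LinearMap.ker m) : ∃ c : ℂ, m = c • l := by
  obtain ⟨a, ha⟩ := exists_one hl
  refine ⟨m a, ?_⟩
  ext x
  have : x - l x • a ∈ LinearMap.ker l := by simp [ha]
  rw [h] at this
  simpa [sub_eq_zero, mul_comm] using this

end basics

section refl
variable {V : Type*} [AddCommGroup V] [Module ℂ V]

/-- determinant -/
noncomputable def dt (g : V ≃ₗ[ℂ] V) : ℂ := LinearMap.det (g : V →ₗ[ℂ] V)

lemma dt_mul (g h : V ≃ₗ[ℂ] V) : dt (g * h) = dt g * dt h := by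
  unfold dt
  rw [← LinearMap.det_comp]; rfl

lemma dt_one : dt (1 : V ≃ₗ[ℂ] V) = 1 := by
  unfold dt
  exact LinearMap.det_id

lemma dt_inv (g : V ≃ₗ[ℂ] V) : dt g⁻¹ * dt g = 1 := by
  rw [← dt_mul, inv_mul_cancel, dt_one]

lemma dt_ne (g : V ≃ₗ[ℂ] V) : dt g ≠ 0 := right_ne_zero_of_mul_eq_one (dt_inv g)

lemma form {s : V ≃ₗ[ℂ] V} {l : V →ₗ[ℂ] ℂ} (hl : l ≠ 0) (hk : ∀ x, l x = 0 → s x = x) :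
    ∃ a, ∀ x, s x = x + l x • a := by
  obtain ⟨c, hc⟩ := exists_one hl
  refine ⟨s c - c, fun x => ?_⟩
  have := hk (x - l x • c) (by simp [hc])
  rw [map_sub, map_smul] at this
  rw [smul_sub, ← sub_eq_zero]
  rw [← sub_eq_zero] at this
  rw [← this]; abel

lemma dt_form [FiniteDimensional ℂ V] {s : V ≃ₗ[ℂ] V} {l : V →ₗ[ℂ] ℂ} {a : V}
    (h : ∀ x, s x = x + l x • a) : dt s = 1 + l a := by
  rw [← LinearMap.transvection.det]
  unfold dt
  congr 1
  ext x
  simp [h, LinearMap.transvection.apply]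

lemma l_dt [FiniteDimensional ℂ V] {s : V ≃ₗ[ℂ] V} {l : V →ₗ[ℂ] ℂ} {a : V}
    (h : ∀ x, s x = x + l x • a) (x : V) : l (s x) = dt s * l x := by
  rw [dt_form h, h]; simp; ring

lemma one_of_dt [FiniteDimensional ℂ V] {s : V ≃ₗ[ℂ] V} {l : V →ₗ[ℂ] ℂ} {a : V}
    (h : ∀ x, s x = x + l x • a) (hf : IsOfFinOrder s) (hd : dt s = 1) : s = 1 := by
  have hla : l a = 0 := by
    have := dt_form h
    rw [hd] at this
    simpa using this
  obtain ⟨m, hm, hs⟩ := hf.exists_pow_eq_one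
  have key : ∀ (k : ℕ) x, (s ^ k) x = x + (k : ℂ) • l x • a := by
    intro k
    induction k with
    | zero => intro x; simp
    | succ k ih =>
      intro x
      rw [pow_succ, LinearEquiv.mul_apply, ih, h]
      simp [hla, add_smul]
      abel
  ext x
  have h1 := key m x
  rw [hs] at h1
  have h2 : (m : ℂ) • l x • a = 0 := by simpa using h1
  have hm' : (m : ℂ) ≠ 0 := by exact_mod_cast hm.ne'
  have h3 : l x • a = 0 := (smul_eq_zero.1 h2).resolve_left hm'
  rw [h, h3]; simp

/-- fixed space -/
def Hs (s : V ≃ₗ[ℂ] V) : Submodule ℂ V := LinearMap.ker ((s : V →ₗ[ℂ] V) - LinearMap.id)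

lemma mem_Hs (s : V ≃ₗ[ℂ] V) (x : V) : x ∈ Hs s ↔ s x = x := by
  simp [Hs, sub_eq_zero]

open Classical in
/-- chosen linear form -/
noncomputable def Lf (H : Submodule ℂ V) : V →ₗ[ℂ] ℂ :=
  if h : ∃ l : V →ₗ[ℂ] ℂ, l ≠ 0 ∧ LinearMap.ker l = H then h.choose else 0

lemma Lf_spec [FiniteDimensional ℂ V] {s : V ≃ₗ[ℂ] V} (hs : IsComplexReflection s) :
    Lf (Hs s) ≠ 0 ∧ LinearMap.ker (Lf (Hs s)) = Hs s := by
  have h : ∃ l : V →ₗ[ℂ] ℂ, l ≠ 0 ∧ LinearMap.ker l = Hs s := by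
    have h1 : finrank ℂ (Hs s) + 1 = finrank ℂ V := hs.2.2
    have hlt : Hs s < ⊤ := by
      rw [lt_top_iff_ne_top]
      intro h
      rw [h, finrank_top] at h1
      omega
    obtain ⟨l, hl, hle⟩ := Submodule.exists_le_ker_of_lt_top _ hlt
    refine ⟨l, hl, (Submodule.eq_of_le_of_finrank_le hle ?_).symm⟩
    have : finrank ℂ (LinearMap.ker l) < finrank ℂ V := by
      apply Submodule.finrank_lt
      intro h
      exact hl (LinearMap.ker_eq_top.1 h)
    omega
  unfold Lf
  rw [dif_pos h]
  exact h.choose_spec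

lemma Lf_iff [FiniteDimensional ℂ V] {s : V ≃ₗ[ℂ] V} (hs : IsComplexReflection s) (x : V) :
    Lf (Hs s) x = 0 ↔ s x = x := by
  rw [← mem_Hs, ← (Lf_spec hs).2, LinearMap.mem_ker, (Lf_spec hs).2]

lemma refl_form [FiniteDimensional ℂ V] {s : V ≃ₗ[ℂ] V} (hs : IsComplexReflection s) :
    ∃ a, ∀ x, s x = x + Lf (Hs s) x • a :=
  form (Lf_spec hs).1 (fun x hx => (Lf_iff hs x).1 hx)

variable (W : Subgroup (V ≃ₗ[ℂ] V)) [Finite W]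

lemma finord {g : V ≃ₗ[ℂ] V} (hg : g ∈ W) : IsOfFinOrder g := by
  have := isOfFinOrder_of_finite (⟨g, hg⟩ : W)
  exact MonoidHom.isOfFinOrder W.subtype this

/-- elements of W -/
noncomputable def Wf : Finset (V ≃ₗ[ℂ] V) := (Set.toFinite (W : Set (V ≃ₗ[ℂ] V))).toFinset

lemma mem_Wf (g : V ≃ₗ[ℂ] V) : g ∈ Wf W ↔ g ∈ W := by simp [Wf]

open Classical in
/-- reflections of W -/
noncomputable def Rf : Finset (V ≃ₗ[ℂ] V) := (Wf W).filter IsComplexReflection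

lemma mem_Rf (g : V ≃ₗ[ℂ] V) : g ∈ Rf W ↔ g ∈ W ∧ IsComplexReflection g := by
  simp [Rf, mem_Wf]

open Classical in
/-- reflections with given hyperplane -/
noncomputable def RH (H : Submodule ℂ V) : Finset (V ≃ₗ[ℂ] V) := (Rf W).filter (fun s => Hs s = H)

open Classical in
/-- pointwise stabilizer -/
noncomputable def FH (H : Submodule ℂ V) : Finset (V ≃ₗ[ℂ] V) :=
  (Wf W).filter (fun g => ∀ x ∈ H, g x = x)

lemma mem_FH (H : Submodule ℂ V) (g) : g ∈ FH W H ↔ g ∈ W ∧ ∀ x ∈ H, g x = x := by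
  simp [FH, mem_Wf]

lemma mem_RH (H : Submodule ℂ V) (g) :
    g ∈ RH W H ↔ (g ∈ W ∧ IsComplexReflection g) ∧ Hs g = H := by
  simp [RH, mem_Rf]

lemma FH_form [FiniteDimensional ℂ V] {t : V ≃ₗ[ℂ] V} (ht : IsComplexReflection t)
    {g : V ≃ₗ[ℂ] V} (hg : g ∈ FH W (Hs t)) :
    ∃ a, ∀ x, g x = x + Lf (Hs t) x • a := by
  rw [mem_FH] at hg
  refine form (Lf_spec ht).1 (fun x hx => hg.2 x ?_)
  rw [mem_Hs]; exact (Lf_iff ht x).1 hx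

open Classical in
lemma FH_eq [FiniteDimensional ℂ V] {t : V ≃ₗ[ℂ] V} (ht : IsComplexReflection t) :
    FH W (Hs t) = insert 1 (RH W (Hs t)) := by
  ext g
  rw [Finset.mem_insert, mem_RH, mem_FH]
  constructor
  · rintro ⟨h1, h2⟩
    by_cases hg : g = 1
    · exact Or.inl hg
    right
    have hle : Hs t ≤ Hs g := fun x hx => (mem_Hs g x).2 (h2 x hx)
    have h1' : finrank ℂ (Hs t) + 1 = finrank ℂ V := ht.2.2
    have hlt : finrank ℂ (Hs g) < finrank ℂ V := by
      apply Submodule.finrank_lt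
      intro h
      apply hg
      ext x
      have : x ∈ Hs g := by rw [h]; trivial
      exact (mem_Hs g x).1 this
    have he : Hs t = Hs g := Submodule.eq_of_le_of_finrank_le hle (by omega)
    refine ⟨⟨h1, finord W h1, hg, ?_⟩, he.symm⟩
    change finrank ℂ (Hs g) + 1 = _
    rw [← he]; exact h1'
  · rintro (rfl | ⟨h1, h2⟩)
    · exact ⟨W.one_mem, by simp⟩
    · refine ⟨h1.1, fun x hx => ?_⟩
      rw [← h2] at hx
      exact (mem_Hs g x).1 hx

lemma FH_card [FiniteDimensional ℂ V] {t : V ≃ₗ[ℂ] V} (ht : IsComplexReflection t) :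
    (FH W (Hs t)).card = (RH W (Hs t)).card + 1 := by
  classical
  rw [FH_eq W ht, Finset.card_insert_of_notMem]
  rw [mem_RH]
  rintro ⟨⟨-, h⟩, -⟩
  exact h.2.1 rfl

lemma dt_inj [FiniteDimensional ℂ V] {t : V ≃ₗ[ℂ] V} (ht : IsComplexReflection t) :
    Set.InjOn dt (FH W (Hs t) : Set (V ≃ₗ[ℂ] V)) := by
  intro g hg h hh e
  have hg' := (mem_FH W _ _).1 (Finset.mem_coe.1 hg)
  have hh' := (mem_FH W _ _).1 (Finset.mem_coe.1 hh)
  have hm : g⁻¹ * h ∈ FH W (Hs t) := by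
    rw [mem_FH]
    refine ⟨W.mul_mem (W.inv_mem hg'.1) hh'.1, fun x hx => ?_⟩
    rw [LinearEquiv.mul_apply, hh'.2 x hx]
    conv_lhs => rw [← hg'.2 x hx]
    rw [← LinearEquiv.mul_apply, inv_mul_cancel]; rfl
  obtain ⟨a, ha⟩ := FH_form W ht hm
  have := one_of_dt ha (finord W ((mem_FH W _ _).1 hm).1) (by rw [dt_mul, ← e, dt_inv])
  exact inv_mul_eq_one.1 this

lemma dt_pow [FiniteDimensional ℂ V] {t : V ≃ₗ[ℂ] V} (htW : t ∈ W) :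
    dt t ^ (FH W (Hs t)).card = 1 := by
  have h : ∏ g ∈ FH W (Hs t), dt g = ∏ g ∈ FH W (Hs t), dt (t * g) := by
    symm
    refine Finset.prod_bij (fun g _ => t * g) ?_ ?_ ?_ ?_
    · intro g hg
      rw [mem_FH] at hg ⊢
      refine ⟨W.mul_mem htW hg.1, fun x hx => ?_⟩
      rw [LinearEquiv.mul_apply, hg.2 x hx]
      exact (mem_Hs _ _).1 hx
    · intro g _ h _ e
      exact mul_left_cancel e
    · intro g hg
      refine ⟨t⁻¹ * g, ?_, by simp⟩
      rw [mem_FH] at hg ⊢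
      refine ⟨W.mul_mem (W.inv_mem htW) hg.1, fun x hx => ?_⟩
      rw [LinearEquiv.mul_apply, hg.2 x hx]
      conv_lhs => rw [← (mem_Hs _ _).1 hx]
      rw [← LinearEquiv.mul_apply, inv_mul_cancel]; rfl
    · intro g _; rfl
  simp only [dt_mul, Finset.prod_mul_distrib, Finset.prod_const] at h
  have hne : ∏ g ∈ FH W (Hs t), dt g ≠ 0 := Finset.prod_ne_zero_iff.2 fun g _ => dt_ne g
  exact (mul_eq_right₀ hne).1 h.symm

lemma exists_dt [FiniteDimensional ℂ V] {t : V ≃ₗ[ℂ] V} (ht : IsComplexReflection t) {k : ℕ}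
    (hk : 0 < k) (hk2 : k ≤ (RH W (Hs t)).card) : ∃ g ∈ FH W (Hs t), dt g ^ k ≠ 1 := by
  classical
  by_contra! hcon
  have h1 : ((FH W (Hs t)).image dt).card = (RH W (Hs t)).card + 1 := by
    rw [Finset.card_image_of_injOn (dt_inj W ht), FH_card W ht]
  have h2 : (FH W (Hs t)).image dt ⊆ (Polynomial.nthRoots k (1 : ℂ)).toFinset := by
    intro z hz
    obtain ⟨g, hg, rfl⟩ := Finset.mem_image.1 hz
    rw [Multiset.mem_toFinset, Polynomial.mem_nthRoots hk]
    exact hcon g hg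
  have h3 := Finset.card_le_card h2
  have h4 := Multiset.toFinset_card_le (Polynomial.nthRoots k (1 : ℂ))
  have h5 := Polynomial.card_nthRoots k (1 : ℂ)
  omega

end refl

section anti
variable {V : Type*} [AddCommGroup V] [Module ℂ V] [FiniteDimensional ℂ V] {n : ℕ}
  (b : Basis (Fin n) ℂ V) (W : Subgroup (V ≃ₗ[ℂ] V)) [Finite W]

/-- group action shorthand -/
noncomputable def ac (g : V ≃ₗ[ℂ] V) : MvPolynomial (Fin n) ℂ →ₐ[ℂ] MvPolynomial (Fin n) ℂ :=
  sg b (g : V →ₗ[ℂ] V)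

lemma ev_ac (g : V ≃ₗ[ℂ] V) (x : V) (p : MvPolynomial (Fin n) ℂ) :
    ev b x (ac b g p) = ev b (g x) p := ev_sg b _ x p

lemma ac_ac (g h : V ≃ₗ[ℂ] V) (p : MvPolynomial (Fin n) ℂ) :
    ac b h (ac b g p) = ac b (g * h) p := by
  apply ev_ext b; intro x; simp only [ev_ac]; rfl

lemma ac_one (p : MvPolynomial (Fin n) ℂ) : ac b 1 p = p := by
  apply ev_ext b; intro x; simp only [ev_ac]; rfl

/-- the linear form polynomial of a reflection -/
noncomputable def lp (s : V ≃ₗ[ℂ] V) : MvPolynomial (Fin n) ℂ := lin b (Lf (Hs s))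

/-- product of all linear forms -/
noncomputable def Pi : MvPolynomial (Fin n) ℂ := ∏ s ∈ Rf W, lp b s

lemma lp_prime {s : V ≃ₗ[ℂ] V} (hs : IsComplexReflection s) : Prime (lp b s) :=
  lin_prime b (Lf_spec hs).1

lemma Pi_hom : (Pi b W).IsHomogeneous (Rf W).card := by
  have := IsHomogeneous.prod (Rf W) (lp b) (fun _ => 1) (fun s _ => lin_hom b _)
  simpa [Pi] using this

lemma Pi_ne : Pi b W ≠ 0 :=
  Finset.prod_ne_zero_iff.2 fun s hs => (lp_prime b ((mem_Rf W s).1 hs).2).ne_zero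

lemma Pi_ev {v : V} (hv : ∀ s ∈ W, IsComplexReflection s → s v ≠ v) : ev b v (Pi b W) ≠ 0 := by
  unfold Pi
  rw [map_prod]
  refine Finset.prod_ne_zero_iff.2 fun s hs => ?_
  rw [mem_Rf] at hs
  rw [lp, ev_lin]
  intro h
  exact hv s hs.1 hs.2 ((Lf_iff hs.2 v).1 h)

lemma ac_lp_self {s t : V ≃ₗ[ℂ] V} (hs : IsComplexReflection s) (h : t ∈ FH W (Hs s)) :
    ac b t (lp b s) = dt t • lp b s := by
  obtain ⟨a, ha⟩ := FH_form W hs h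
  apply ev_ext b; intro x
  rw [ev_ac, lp, ev_lin, l_dt ha, map_smul, ev_lin, smul_eq_mul]

lemma Hs_conj (s t : V ≃ₗ[ℂ] V) (x : V) : x ∈ Hs (t⁻¹ * s * t) ↔ t x ∈ Hs s := by
  rw [mem_Hs, mem_Hs, LinearEquiv.mul_apply, LinearEquiv.mul_apply]
  constructor
  · intro h
    conv_rhs => rw [← h]
    rw [← LinearEquiv.mul_apply t, mul_inv_cancel]; rfl
  · intro h
    rw [h, ← LinearEquiv.mul_apply, inv_mul_cancel]; rfl

lemma refl_conj {s t : V ≃ₗ[ℂ] V} (hs : s ∈ Rf W) (ht : t ∈ W) : t⁻¹ * s * t ∈ Rf W := by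
  rw [mem_Rf] at hs ⊢
  have hm : t⁻¹ * s * t ∈ W := W.mul_mem (W.mul_mem (W.inv_mem ht) hs.1) ht
  refine ⟨hm, finord W hm, ?_, ?_⟩
  · intro h
    apply hs.2.2.1
    have : s = t * (t⁻¹ * s * t) * t⁻¹ := by group
    rw [this, h]; group
  · change finrank ℂ (Hs (t⁻¹ * s * t)) + 1 = _
    have he : Hs (t⁻¹ * s * t) = (Hs s).comap (t : V →ₗ[ℂ] V) := by
      ext x; rw [Hs_conj]; rfl
    have h2 : (Hs (t⁻¹ * s * t)).map (t : V →ₗ[ℂ] V) = Hs s := by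
      rw [he]
      exact Submodule.map_comap_eq_of_surjective t.surjective _
    have h3 := LinearEquiv.finrank_map_eq t (Hs (t⁻¹ * s * t))
    have h4 : finrank ℂ (Hs s) + 1 = finrank ℂ V := hs.2.2.2
    rw [← h3]
    rw [← h4, ← h2]

lemma ac_lp {s t : V ≃ₗ[ℂ] V} (hs : s ∈ Rf W) (ht : t ∈ W) :
    ∃ c : ℂ, ac b t (lp b s) = c • lp b (t⁻¹ * s * t) := by
  have hr := ((mem_Rf W _).1 (refl_conj W hs ht)).2
  have hs' := ((mem_Rf W _).1 hs).2
  have hk : LinearMap.ker (Lf (Hs (t⁻¹ * s * t))) =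
      LinearMap.ker (Lf (Hs s) ∘ₗ (t : V →ₗ[ℂ] V)) := by
    rw [(Lf_spec hr).2]
    ext x
    rw [Hs_conj, mem_Hs, LinearMap.mem_ker]
    exact (Lf_iff hs' (t x)).symm
  obtain ⟨c, hc⟩ := ker_eq_smul (Lf_spec hr).1 hk
  refine ⟨c, ?_⟩
  rw [lp, lp, ac, sg_lin, hc, lin_smul]

/-- semi-invariance -/
lemma Pi_ac {t : V ≃ₗ[ℂ] V} (ht : t ∈ Rf W) : dt t • ac b t (Pi b W) = Pi b W := by
  classical
  have ht' := (mem_Rf W _).1 ht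
  set R2 := (Rf W).filter (fun s => ¬ Hs s = Hs t) with hR2
  have hsplit : Pi b W = (∏ s ∈ RH W (Hs t), lp b s) * ∏ s ∈ R2, lp b s := by
    unfold Pi RH
    exact (Finset.prod_filter_mul_prod_filter_not _ _ _).symm
  have htF : t ∈ FH W (Hs t) := (mem_FH W _ _).2 ⟨ht'.1, fun x hx => (mem_Hs _ _).1 hx⟩
  have h1 : ac b t (∏ s ∈ RH W (Hs t), lp b s) =
      dt t ^ (RH W (Hs t)).card • ∏ s ∈ RH W (Hs t), lp b s := by
    rw [map_prod, ← Finset.prod_const, ← Finset.prod_smul]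
    refine Finset.prod_congr rfl fun s hs => ?_
    rw [mem_RH] at hs
    exact ac_lp_self b W hs.1.2 (by rw [hs.2]; exact htF)
  have h2 : ∃ c : ℂ, ac b t (∏ s ∈ R2, lp b s) = c • ∏ s ∈ R2, lp b s := by
    have : ∀ s : V ≃ₗ[ℂ] V, ∃ c : ℂ, s ∈ R2 → ac b t (lp b s) = c • lp b (t⁻¹ * s * t) := by
      intro s
      by_cases hs : s ∈ R2
      · obtain ⟨c, hc⟩ := ac_lp b W (Finset.mem_filter.1 hs).1 ht'.1
        exact ⟨c, fun _ => hc⟩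
      · exact ⟨0, fun h => absurd h hs⟩
    choose c hc using this
    refine ⟨∏ s ∈ R2, c s, ?_⟩
    rw [map_prod, Finset.prod_congr rfl hc, Finset.prod_smul]
    congr 1
    have key : ∀ s, Hs (t⁻¹ * s * t) = Hs t → Hs s = Hs t := by
      intro s h
      ext x
      have := Hs_conj s t (t⁻¹ x)
      rw [h, ← LinearEquiv.mul_apply t, mul_inv_cancel] at this
      change _ ↔ x ∈ Hs s at this
      rw [← this, mem_Hs, mem_Hs, ← LinearEquiv.mul_apply t, mul_inv_cancel]
      constructor
      · intro e
        change x = t⁻¹ x at e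
        conv_lhs => rw [e]
        rw [← LinearEquiv.mul_apply t, mul_inv_cancel]; rfl
      · intro e
        change x = t⁻¹ x
        conv_rhs => rw [← e]
        rw [← LinearEquiv.mul_apply, inv_mul_cancel]; rfl
    have hmaps : ∀ s ∈ R2, t⁻¹ * s * t ∈ R2 := by
      intro s hs
      rw [hR2, Finset.mem_filter] at hs ⊢
      exact ⟨refl_conj W hs.1 ht'.1, fun h => hs.2 (key s h)⟩
    have hinj : Set.InjOn (fun s => t⁻¹ * s * t) (R2 : Set (V ≃ₗ[ℂ] V)) := by
      intro s _ s' _ e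
      simpa using e
    have himg : R2.image (fun s => t⁻¹ * s * t) = R2 := by
      apply Finset.eq_of_subset_of_card_le
      · intro y hy
        obtain ⟨s, hs, rfl⟩ := Finset.mem_image.1 hy
        exact hmaps s hs
      · rw [Finset.card_image_of_injOn hinj]
    conv_rhs => rw [← himg]
    rw [Finset.prod_image hinj]
  obtain ⟨c, hc⟩ := h2
  have h3 : ∃ x, t x = x ∧ ev b x (∏ s ∈ R2, lp b s) ≠ 0 := by
    by_contra! hcon
    have hd : lp b t ∣ ∏ s ∈ R2, lp b s := by
      rw [lp, dvd_iff b (Lf_spec ht'.2).1]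
      intro x hx
      exact hcon x ((Lf_iff ht'.2 x).1 hx)
    rw [(lp_prime b ht'.2).dvd_finsetProd_iff] at hd
    obtain ⟨s, hs, hd⟩ := hd
    rw [hR2, Finset.mem_filter, mem_Rf] at hs
    have := lin_dvd_lin b (Lf_spec ht'.2).1 (Lf_spec hs.1.2).1 hd
    rw [(Lf_spec ht'.2).2, (Lf_spec hs.1.2).2] at this
    exact hs.2 this.symm
  obtain ⟨x, hx, hx0⟩ := h3
  have hc1 : c = 1 := by
    have := congrArg (ev b x) hc
    rw [ev_ac, hx, map_smul, smul_eq_mul] at this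
    exact (mul_eq_right₀ hx0).1 this.symm
  rw [hsplit, map_mul, h1, hc, hc1, one_smul, smul_mul_assoc, smul_smul, ← pow_succ',
    ← FH_card W ht'.2, dt_pow W ht'.1, one_smul]

/-- a semi-invariant polynomial is divisible by high powers of each form -/
lemma pow_dvd {A : MvPolynomial (Fin n) ℂ} (hA : ∀ g ∈ W, dt g • ac b g A = A)
    {t : V ≃ₗ[ℂ] V} (ht : IsComplexReflection t) (k : ℕ) (hk : k ≤ (RH W (Hs t)).card) :
    lp b t ^ k ∣ A := by
  induction k with
  | zero => simp
  | succ k ih =>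
    obtain ⟨B, hB⟩ := ih (by omega)
    obtain ⟨g, hg, hgd⟩ := exists_dt W ht (k := k + 1) (by omega) hk
    have h1 := hA g ((mem_FH W _ _).1 hg).1
    have hp0 : lp b t ^ k ≠ 0 := pow_ne_zero _ (lp_prime b ht).ne_zero
    have h2 : dt g ^ (k + 1) • ac b g B = B := by
      rw [hB, map_mul, map_pow, ac_lp_self b W ht hg] at h1
      apply mul_left_cancel₀ hp0
      rw [← h1.trans rfl]
      rw [smul_pow, pow_succ', smul_mul_assoc, smul_smul, mul_smul_comm]
    have h3 : lp b t ∣ B := by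
      rw [lp, dvd_iff b (Lf_spec ht).1]
      intro x hx
      have hgx : g x = x := ((mem_FH W _ _).1 hg).2 x ((mem_Hs _ _).2 ((Lf_iff ht x).1 hx))
      have h4 := congrArg (ev b x) h2
      rw [map_smul, ev_ac, hgx, smul_eq_mul] at h4
      by_contra h0
      exact hgd ((mul_eq_right₀ h0).1 h4)
    rw [hB, pow_succ]
    exact mul_dvd_mul_left _ h3

lemma Pi_dvd {A : MvPolynomial (Fin n) ℂ} (hA : ∀ g ∈ W, dt g • ac b g A = A) :
    Pi b W ∣ A := by
  classical
  have h : Pi b W = ∏ H ∈ (Rf W).image Hs, lin b (Lf H) ^ (RH W H).card := by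
    unfold Pi
    rw [← Finset.prod_fiberwise_of_maps_to (t := (Rf W).image Hs) (g := Hs)
      (fun s hs => Finset.mem_image_of_mem _ hs)]
    refine Finset.prod_congr rfl fun H _ => ?_
    rw [← Finset.prod_const]
    unfold RH
    refine Finset.prod_congr ?_ fun s hs => ?_
    · ext s; simp
    · rw [lp, (Finset.mem_filter.1 hs).2]
  rw [h]
  apply Finset.prod_dvd_of_isRelPrime
  · intro H hH H' hH' hne
    obtain ⟨s, hs, rfl⟩ := Finset.mem_image.1 (Finset.mem_coe.1 hH)
    obtain ⟨s', hs', rfl⟩ := Finset.mem_image.1 (Finset.mem_coe.1 hH')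
    rw [mem_Rf] at hs hs'
    apply IsRelPrime.pow
    rw [(lin_prime b (Lf_spec hs.2).1).irreducible.isRelPrime_iff_not_dvd]
    intro hd
    have := lin_dvd_lin b (Lf_spec hs.2).1 (Lf_spec hs'.2).1 hd
    rw [(Lf_spec hs.2).2, (Lf_spec hs'.2).2] at this
    exact hne this
  · intro H hH
    obtain ⟨s, hs, rfl⟩ := Finset.mem_image.1 hH
    exact pow_dvd b W hA ((mem_Rf W _).1 hs).2 _ le_rfl

lemma anti_eq (hW : Subgroup.closure {s | s ∈ W ∧ IsComplexReflection s} = W)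
    {A : MvPolynomial (Fin n) ℂ} (hA : ∀ g ∈ W, dt g • ac b g A = A) :
    ∃ q, A = Pi b W * q ∧ ∀ g ∈ W, ac b g q = q := by
  obtain ⟨q, hq⟩ := Pi_dvd b W hA
  refine ⟨q, hq, ?_⟩
  intro g hg
  rw [← hW] at hg
  induction hg using Subgroup.closure_induction with
  | mem t ht =>
    have h1 := hA t ht.1
    rw [hq, map_mul, ← smul_mul_assoc, Pi_ac b W ((mem_Rf W t).2 ht)] at h1
    exact mul_left_cancel₀ (Pi_ne b W) h1
  | one => exact ac_one b q
  | mul g h _ _ h1 h2 => rw [← ac_ac, h1, h2]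
  | inv g _ h1 =>
    conv_lhs => rw [← h1]
    rw [ac_ac, mul_inv_cancel, ac_one]

end anti

section ideal
variable {V : Type*} [AddCommGroup V] [Module ℂ V] [FiniteDimensional ℂ V] {n : ℕ}
  (b : Basis (Fin n) ℂ V) (W : Subgroup (V ≃ₗ[ℂ] V)) [Finite W]

/-- generators of the Hilbert ideal -/
def gens : Set (MvPolynomial (Fin n) ℂ) :=
  {f | (∃ d, 0 < d ∧ f.IsHomogeneous d) ∧ ∀ g ∈ W, ac b g f = f}

/-- the Hilbert ideal -/
noncomputable def hI : Ideal (MvPolynomial (Fin n) ℂ) := Ideal.span (gens b W)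

lemma ac_hc (g : V ≃ₗ[ℂ] V) (p : MvPolynomial (Fin n) ℂ) (k : ℕ) :
    homogeneousComponent k (ac b g p) = ac b g (homogeneousComponent k p) := hc_sg b _ p k

lemma hc_gens {f : MvPolynomial (Fin n) ℂ} (hf : ∀ g ∈ W, ac b g f = f) {k : ℕ} (hk : 0 < k) :
    homogeneousComponent k f ∈ hI b W := by
  apply Ideal.subset_span
  exact ⟨⟨k, hk, homogeneousComponent_isHomogeneous _ _⟩, fun g hg => by rw [← ac_hc, hf g hg]⟩

lemma inv_mem {f : MvPolynomial (Fin n) ℂ} (hf : ∀ g ∈ W, ac b g f = f) (h0 : ev b 0 f = 0) :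
    f ∈ hI b W := by
  rw [hc_sum f]
  apply Ideal.sum_mem
  intro i _
  rcases Nat.eq_zero_or_pos i with hi | hi
  · subst hi
    have : coeff 0 f = 0 := by
      rw [← h0]
      simp only [ev, map_zero, Finsupp.coe_zero, Pi.zero_apply]
      rw [← constantCoeff_eq]
      have := MvPolynomial.aeval_zero (S₁ := ℂ) f
      simpa using this.symm
    rw [homogeneousComponent_zero, this]; simp
  · exact hc_gens b W hf hi

lemma X_pow_mem (i : Fin n) : (X i : MvPolynomial (Fin n) ℂ) ^ (Wf W).card ∈ hI b W := by
  classical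
  set F : Polynomial (MvPolynomial (Fin n) ℂ) :=
    ∏ g ∈ Wf W, (Polynomial.X - Polynomial.C (ac b g (X i))) with hF
  have hmon : F.Monic := Polynomial.monic_prod_of_monic _ _ fun g _ => Polynomial.monic_X_sub_C _
  have hdeg : F.natDegree = (Wf W).card := by
    rw [hF, Polynomial.natDegree_prod_of_monic _ _ fun g _ => Polynomial.monic_X_sub_C _]
    simp
  have hroot : F.eval (X i) = 0 := by
    rw [hF, Polynomial.eval_prod]
    apply Finset.prod_eq_zero ((mem_Wf W 1).2 W.one_mem)
    rw [ac_one]; simp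
  have hinv : ∀ h ∈ W, F.map (ac b h : MvPolynomial (Fin n) ℂ →+* MvPolynomial (Fin n) ℂ) = F := by
    intro h hh
    rw [hF, Polynomial.map_prod]
    refine Finset.prod_bij (fun g _ => g * h) ?_ ?_ ?_ ?_
    · intro g hg
      rw [mem_Wf] at hg ⊢
      exact W.mul_mem hg hh
    · intro g _ g' _ e
      exact mul_right_cancel e
    · intro g hg
      rw [mem_Wf] at hg
      exact ⟨g * h⁻¹, (mem_Wf W _).2 (W.mul_mem hg (W.inv_mem hh)), by simp⟩
    · intro g _
      simp [ac_ac]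
  have hz : F.map (ev b 0 : MvPolynomial (Fin n) ℂ →+* ℂ) = Polynomial.X ^ (Wf W).card := by
    rw [hF, Polynomial.map_prod, ← Finset.prod_const]
    refine Finset.prod_congr rfl fun g _ => ?_
    simp [ev_ac, ev_X]
  have hcoeff : ∀ j < (Wf W).card, F.coeff j ∈ hI b W := by
    intro j hj
    apply inv_mem
    · intro h hh
      have := congrArg (fun p => Polynomial.coeff p j) (hinv h hh)
      simpa [Polynomial.coeff_map] using this
    · have := congrArg (fun p => Polynomial.coeff p j) hz
      simpa [Polynomial.coeff_map, Polynomial.coeff_X_pow, hj.ne] using this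
  rw [Polynomial.eval_eq_sum_range, hdeg, Finset.sum_range_succ, ← hdeg, hmon.coeff_natDegree,
    one_mul, hdeg] at hroot
  rw [eq_neg_of_add_eq_zero_right hroot]
  apply neg_mem
  apply Ideal.sum_mem
  intro j hj
  exact Ideal.mul_mem_right _ _ (hcoeff j (Finset.mem_range.1 hj))

lemma big_mem {k : ℕ} (hk : n * (Wf W).card < k) {p : MvPolynomial (Fin n) ℂ}
    (hp : p.IsHomogeneous k) : p ∈ hI b W := by
  rw [p.as_sum]
  apply Ideal.sum_mem
  intro d hd
  have hdk : d.degree = k := by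
    by_contra h
    exact (mem_support_iff.1 hd) (hp.coeff_eq_zero h)
  have : ∃ i, (Wf W).card ≤ d i := by
    by_contra! hcon
    have : d.degree ≤ ∑ i : Fin n, (Wf W).card := by
      rw [Finsupp.degree_eq_sum]
      exact Finset.sum_le_sum fun i _ => (hcon i).le
    simp at this
    omega
  obtain ⟨i, hi⟩ := this
  have : monomial d (coeff d p) =
      monomial (d - Finsupp.single i (Wf W).card) (coeff d p) * X i ^ (Wf W).card := by
    rw [X_pow_eq_monomial, monomial_mul, mul_one, tsub_add_cancel_of_le]
    simpa using hi
  rw [this]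
  exact Ideal.mul_mem_left _ _ (X_pow_mem b W i)

lemma ac_mem {g : V ≃ₗ[ℂ] V} (hg : g ∈ W) {p : MvPolynomial (Fin n) ℂ} (hp : p ∈ hI b W) :
    ac b g p ∈ hI b W := by
  induction hp using Submodule.closure_induction with
  | zero => simp
  | add x y _ _ hx hy => rw [map_add]; exact add_mem hx hy
  | smul_mem r x h =>
    rw [smul_eq_mul, map_mul, h.2 g hg]
    exact Ideal.mul_mem_left _ _ (Ideal.subset_span h)

lemma smul_mem' (c : ℂ) {p : MvPolynomial (Fin n) ℂ} (hp : p ∈ hI b W) : c • p ∈ hI b W := by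
  rw [smul_eq_C_mul]; exact Ideal.mul_mem_left _ _ hp

lemma diff_mem {s : V ≃ₗ[ℂ] V} (hs : s ∈ Rf W) {p : MvPolynomial (Fin n) ℂ} (hp : p ∈ hI b W) :
    ∃ y ∈ hI b W, p - ac b s p = lp b s * y := by
  rw [mem_Rf] at hs
  obtain ⟨a, ha⟩ := refl_form hs.2
  induction hp using Submodule.closure_induction with
  | zero => exact ⟨0, zero_mem _, by simp⟩
  | add x y _ _ hx hy =>
    obtain ⟨u, hu, hu'⟩ := hx
    obtain ⟨w, hw, hw'⟩ := hy
    refine ⟨u + w, add_mem hu hw, ?_⟩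
    rw [mul_add, ← hu', ← hw', map_add]; ring
  | smul_mem r x h =>
    obtain ⟨y, hy⟩ := dvd_sub b (g := (s : V →ₗ[ℂ] V)) ha r
    refine ⟨y * x, Ideal.mul_mem_left _ _ (Ideal.subset_span h), ?_⟩
    rw [smul_eq_mul, map_mul, h.2 s hs.1, ← mul_assoc, ← sub_mul]
    rw [lp, ← hy]; rfl

lemma refl_step {s : V ≃ₗ[ℂ] V} (hs : s ∈ Rf W) {r : MvPolynomial (Fin n) ℂ}
    (hr : lp b s * r ∈ hI b W) : r - dt s • ac b s r ∈ hI b W := by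
  obtain ⟨y, hy, h⟩ := diff_mem b W hs hr
  have hs' := (mem_Rf W s).1 hs
  have htF : s ∈ FH W (Hs s) := (mem_FH W _ _).2 ⟨hs'.1, fun x hx => (mem_Hs _ _).1 hx⟩
  rw [map_mul, ac_lp_self b W hs'.2 htF] at h
  have : r - dt s • ac b s r = y := by
    apply mul_left_cancel₀ (lp_prime b hs'.2).ne_zero
    rw [← h, mul_sub, smul_mul_assoc, mul_smul_comm]
  rw [this]; exact hy

lemma all_step (hW : Subgroup.closure {s | s ∈ W ∧ IsComplexReflection s} = W)
    {r : MvPolynomial (Fin n) ℂ} (hr : ∀ s ∈ Rf W, lp b s * r ∈ hI b W) :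
    ∀ g ∈ W, r - dt g • ac b g r ∈ hI b W := by
  have aux : ∀ g ∈ Subgroup.closure {s | s ∈ W ∧ IsComplexReflection s},
      r - dt g • ac b g r ∈ hI b W := by
    intro g hg
    induction hg using Subgroup.closure_induction with
    | mem t ht => exact refl_step b W ((mem_Rf W t).2 ht) (hr t ((mem_Rf W t).2 ht))
    | one => simp [ac_one, dt_one]
    | mul g h hg hh h1 h2 =>
      rw [hW] at hg hh
      have h3 := smul_mem' b W (dt h) (ac_mem b W hh h1)
      have h4 := add_mem h2 h3
      convert h4 using 1
      rw [map_sub, map_smul, ac_ac, smul_sub, smul_smul, dt_mul, mul_comm (dt g)]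
      ring
    | inv g hg h1 =>
      rw [hW] at hg
      have h3 := smul_mem' b W (dt g⁻¹) (ac_mem b W (W.inv_mem hg) h1)
      have h4 := neg_mem h3
      convert h4 using 1
      rw [map_sub, map_smul, ac_ac, smul_sub, smul_smul, dt_inv, mul_inv_cancel, ac_one, one_smul]
      ring
  intro g hg
  exact aux g (by rw [hW]; exact hg)

/-- Key: top forms of polynomials vanishing on a regular orbit lie in the Hilbert ideal. -/
lemma top_step (hW : Subgroup.closure {s | s ∈ W ∧ IsComplexReflection s} = W)
    {v : V} (hv : ∀ s ∈ W, IsComplexReflection s → s v ≠ v) (k : ℕ)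
    (ih : ∀ p : MvPolynomial (Fin n) ℂ, (∀ g ∈ W, ev b (g v) p = 0) → p.totalDegree ≤ k + 1 →
      homogeneousComponent (k + 1) p ∈ hI b W)
    (p : MvPolynomial (Fin n) ℂ) (hp : ∀ g ∈ W, ev b (g v) p = 0) (hd : p.totalDegree ≤ k) :
    homogeneousComponent k p ∈ hI b W := by
  have h1 : ∀ s ∈ Rf W, lp b s * homogeneousComponent k p ∈ hI b W := by
    intro s hs
    have hl : (lp b s).IsHomogeneous 1 := lin_hom b _
    rw [← hc_mul hl, add_comm 1 k]
    apply ih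
    · intro g hg; rw [map_mul, hp g hg, mul_zero]
    · refine (totalDegree_mul _ _).trans ?_
      have := (lin_hom b (Lf (Hs s))).totalDegree_le
      unfold lp
      omega
  have h2 := all_step b W hW h1
  set A := ∑ g ∈ Wf W, dt g • ac b g p with hA
  have h3 : ((Wf W).card : ℂ) • homogeneousComponent k p - homogeneousComponent k A ∈ hI b W := by
    have : ((Wf W).card : ℂ) • homogeneousComponent k p - homogeneousComponent k A =
        ∑ g ∈ Wf W, (homogeneousComponent k p - dt g • ac b g (homogeneousComponent k p)) := by
      rw [Finset.sum_sub_distrib, Finset.sum_const, hA, map_sum]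
      simp only [map_smul, ac_hc]
      rw [Nat.cast_smul_eq_nsmul]
    rw [this]
    exact Ideal.sum_mem _ fun g hg => h2 g ((mem_Wf W g).1 hg)
  have hAanti : ∀ h ∈ W, dt h • ac b h A = A := by
    intro h hh
    rw [hA, map_sum, Finset.smul_sum]
    refine Finset.sum_bij (fun g _ => g * h) ?_ ?_ ?_ ?_
    · intro g hg
      rw [mem_Wf] at hg ⊢
      exact W.mul_mem hg hh
    · intro g _ g' _ e
      exact mul_right_cancel e
    · intro g hg
      rw [mem_Wf] at hg
      exact ⟨g * h⁻¹, (mem_Wf W _).2 (W.mul_mem hg (W.inv_mem hh)), by simp⟩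
    · intro g _
      rw [map_smul, smul_smul, ac_ac, dt_mul, mul_comm (dt g)]
  have hAv : ev b v A = 0 := by
    rw [hA, map_sum]
    apply Finset.sum_eq_zero
    intro g hg
    rw [map_smul, ev_ac, hp g ((mem_Wf W g).1 hg), smul_zero]
  have hAd : A.totalDegree ≤ k := by
    apply totalDegree_finsetSum_le
    intro g _
    exact (totalDegree_smul_le _ _).trans ((deg_sg b _ p).trans hd)
  obtain ⟨q, hq, hqinv⟩ := anti_eq b W hW hAanti
  have h4 : homogeneousComponent k A ∈ hI b W := by
    rcases lt_or_ge (Rf W).card k with hlt | hge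
    · obtain ⟨j, rfl⟩ := Nat.exists_eq_add_of_lt hlt
      rw [hq, add_assoc, hc_mul (Pi_hom b W)]
      exact Ideal.mul_mem_left _ _ (hc_gens b W hqinv (by omega))
    · have hq0 : q = 0 := by
        by_contra hne
        have hdeg := totalDegree_mul_of_isDomain (Pi_ne b W) hne
        rw [← hq, (Pi_hom b W).totalDegree (Pi_ne b W)] at hdeg
        have hq0 : q.totalDegree = 0 := by omega
        rw [totalDegree_eq_zero_iff_eq_C] at hq0
        rw [hq, map_mul] at hAv
        have h5 := (mul_eq_zero.1 hAv).resolve_left (Pi_ev b W hv)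
        rw [hq0] at h5
        apply hne
        rw [hq0]
        simp only [ev, aeval_C] at h5
        have h6 : coeff 0 q = 0 := by simpa using h5
        rw [h6, C_0]
      rw [hq, hq0]; simp
  have h5 := add_mem h3 h4
  rw [sub_add_cancel] at h5
  have hc0 : ((Wf W).card : ℂ) ≠ 0 := by
    have : (Wf W).card ≠ 0 := Finset.card_ne_zero_of_mem ((mem_Wf W 1).2 W.one_mem)
    exact_mod_cast this
  have h6 := smul_mem' b W (((Wf W).card : ℂ)⁻¹) h5
  rwa [smul_smul, inv_mul_cancel₀ hc0, one_smul] at h6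

lemma top_mem (hW : Subgroup.closure {s | s ∈ W ∧ IsComplexReflection s} = W)
    {v : V} (hv : ∀ s ∈ W, IsComplexReflection s → s v ≠ v) (k : ℕ)
    (p : MvPolynomial (Fin n) ℂ) (hp : ∀ g ∈ W, ev b (g v) p = 0) (hd : p.totalDegree ≤ k) :
    homogeneousComponent k p ∈ hI b W := by
  have : ∀ m k, n * (Wf W).card < k + m → ∀ p : MvPolynomial (Fin n) ℂ,
      (∀ g ∈ W, ev b (g v) p = 0) → p.totalDegree ≤ k → homogeneousComponent k p ∈ hI b W := by
    intro m
    induction m with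
    | zero => intro k hk p _ _; exact big_mem b W hk (homogeneousComponent_isHomogeneous _ _)
    | succ m ih =>
      intro k hk
      exact top_step b W hW hv k (ih (k + 1) (by omega))
  exact this (n * (Wf W).card + 1) k (by omega) p hp hd

/-- ideal of invariants vanishing at v -/
noncomputable def vI (v : V) : Ideal (MvPolynomial (Fin n) ℂ) :=
  Ideal.span {f | ev b v f = 0 ∧ ∀ g ∈ W, ac b g f = f}

lemma lift_top (v : V) {q : MvPolynomial (Fin n) ℂ} (hq : q ∈ hI b W) (k : ℕ) :
    ∃ r ∈ vI b W v, r.totalDegree ≤ k ∧ homogeneousComponent k r = homogeneousComponent k q := by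
  induction hq using Submodule.closure_induction with
  | zero => exact ⟨0, zero_mem _, by simp, rfl⟩
  | add x y _ _ hx hy =>
    obtain ⟨r, h1, h2, h3⟩ := hx
    obtain ⟨r', h1', h2', h3'⟩ := hy
    refine ⟨r + r', add_mem h1 h1', (totalDegree_add _ _).trans (max_le h2 h2'), ?_⟩
    rw [map_add, map_add, h3, h3']
  | smul_mem a f hf =>
    obtain ⟨⟨d, hd, hfd⟩, hinv⟩ := hf
    rcases lt_or_ge k d with hlt | hge
    · refine ⟨0, zero_mem _, by simp, ?_⟩
      rw [smul_eq_mul, mul_comm, hc_mul_lt hfd _ _ hlt, map_zero]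
    · obtain ⟨j, rfl⟩ := Nat.exists_eq_add_of_le hge
      refine ⟨(f - C (ev b v f)) * homogeneousComponent j a, ?_, ?_, ?_⟩
      · apply Ideal.mul_mem_right
        apply Ideal.subset_span
        refine ⟨by simp [ev], fun g hg => ?_⟩
        rw [map_sub, hinv g hg]
        simp [ac, sg]
      · refine (totalDegree_mul _ _).trans ?_
        have h1 := totalDegree_sub_C_le f (ev b v f)
        have h2 := hfd.totalDegree_le
        have h3 := (homogeneousComponent_isHomogeneous j a).totalDegree_le
        omega
      · rw [smul_eq_mul, mul_comm a, hc_mul hfd, sub_mul, map_sub, hc_mul hfd]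
        rw [homogeneousComponent_C_mul, hc_hom (homogeneousComponent_isHomogeneous j a) j,
          hc_hom (homogeneousComponent_isHomogeneous j a) (d + j), if_pos rfl, if_neg (by omega)]
        simp

lemma vI_ev {v : V} {q : MvPolynomial (Fin n) ℂ} (hq : q ∈ vI b W v) :
    ∀ g ∈ W, ev b (g v) q = 0 := by
  intro g hg
  induction hq using Submodule.closure_induction with
  | zero => simp
  | add x y _ _ hx hy => rw [map_add, hx, hy, add_zero]
  | smul_mem a f hf => rw [smul_eq_mul, map_mul, ← ev_ac b g v f, hf.2 g hg, hf.1, mul_zero]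

lemma mem_vI (hW : Subgroup.closure {s | s ∈ W ∧ IsComplexReflection s} = W)
    {v : V} (hv : ∀ s ∈ W, IsComplexReflection s → s v ≠ v)
    (p : MvPolynomial (Fin n) ℂ) (hp : ∀ g ∈ W, ev b (g v) p = 0) : p ∈ vI b W v := by
  have : ∀ k, ∀ p : MvPolynomial (Fin n) ℂ, (∀ g ∈ W, ev b (g v) p = 0) → p.totalDegree < k →
      p ∈ vI b W v := by
    intro k
    induction k with
    | zero => intro p _ h; omega
    | succ k ih =>
      intro p hp hd
      obtain ⟨r, h1, h2, h3⟩ := lift_top b W v (top_mem b W hW hv k p hp (by omega)) k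
      rw [hc_hom (homogeneousComponent_isHomogeneous k p) k, if_pos rfl] at h3
      have h4 : p - r ∈ vI b W v := by
        have h5 : (p - r).totalDegree ≤ k := (totalDegree_sub _ _).trans (max_le (by omega) h2)
        rcases deg_lt h5 (by rw [map_sub, h3, sub_self]) with h | h
        · rw [h]; exact zero_mem _
        · refine ih _ (fun g hg => ?_) h
          rw [map_sub, hp g hg, vI_ev b W h1 g hg, sub_zero]
      have := add_mem h4 h1
      rwa [sub_add_cancel] at this
  exact this _ p hp (Nat.lt_succ_self _)

/-- restriction to a line -/
noncomputable def ln (v u : V) : MvPolynomial (Fin n) ℂ →ₐ[ℂ] Polynomial ℂ :=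
  aeval (fun i => Polynomial.C (b.repr v i) + Polynomial.C (b.repr u i) * Polynomial.X)

lemma ln_eval (v u : V) (t : ℂ) (p : MvPolynomial (Fin n) ℂ) :
    (ln b v u p).eval t = ev b (v + t • u) p := by
  have : (Polynomial.aeval t).comp (ln b v u) = ev b (v + t • u) := by
    apply MvPolynomial.algHom_ext
    intro i
    simp [ln, ev]
    ring
  have := DFunLike.congr_fun this p
  simpa [Polynomial.coe_aeval_eq_eval] using this

/-- directional derivative -/
noncomputable def dd (v u : V) (p : MvPolynomial (Fin n) ℂ) : ℂ :=
  (Polynomial.derivative (ln b v u p)).eval 0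

lemma dd_mul (v u : V) (p q : MvPolynomial (Fin n) ℂ) :
    dd b v u (p * q) = dd b v u p * ev b v q + ev b v p * dd b v u q := by
  unfold dd
  have hp := ln_eval b v u 0 p
  have hq := ln_eval b v u 0 q
  rw [zero_smul, add_zero] at hp hq
  rw [map_mul, Polynomial.derivative_mul, Polynomial.eval_add, Polynomial.eval_mul,
    Polynomial.eval_mul, hp, hq]

lemma dd_ac {w : V ≃ₗ[ℂ] V} {v : V} (hw : w v = v) (u : V) (p : MvPolynomial (Fin n) ℂ) :
    dd b v u (ac b w p) = dd b v (w u) p := by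
  have : ln b v u (ac b w p) = ln b v (w u) p := by
    apply Polynomial.funext
    intro t
    rw [ln_eval, ln_eval, ev_ac, map_add, map_smul, hw]
  unfold dd
  rw [this]

lemma dd_vI {w : V ≃ₗ[ℂ] V} (hwW : w ∈ W) {v : V} (hw : w v = v) (u : V)
    {p : MvPolynomial (Fin n) ℂ} (hp : p ∈ vI b W v) : dd b v (w u) p = dd b v u p := by
  induction hp using Submodule.closure_induction with
  | zero => simp [dd]
  | add x y _ _ hx hy =>
    have : ∀ u, dd b v u (x + y) = dd b v u x + dd b v u y := by intro u; simp [dd]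
    rw [this, this, hx, hy]
  | smul_mem a f hf =>
    rw [smul_eq_mul, dd_mul, dd_mul, hf.1, ← dd_ac b hw u f, hf.2 w hwW]
    simp

end ideal

theorem main {V : Type*} [AddCommGroup V] [Module ℂ V]
    [FiniteDimensional ℂ V]
    (W : Subgroup (V ≃ₗ[ℂ] V)) [Finite W]
    (hW : Subgroup.closure {s | s ∈ W ∧ IsComplexReflection s} = W)
    (v : V) (hv : ∀ s ∈ W, IsComplexReflection s → s v ≠ v)
    (w : V ≃ₗ[ℂ] V) (hw : w ∈ W) (hfix : w v = v) :
    w = 1 := by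
  classical
  let b := Module.finBasis ℂ V
  have hsep : ∀ g : V ≃ₗ[ℂ] V, ∃ f : MvPolynomial (Fin (finrank ℂ V)) ℂ,
      g v ≠ v → ev b (g v) f = 0 ∧ ev b v f ≠ 0 := by
    intro g
    by_cases hy : g v = v
    · exact ⟨0, fun h => absurd hy h⟩
    · have : ∃ i, b.repr (g v) i ≠ b.repr v i := by
        by_contra! hcon
        exact hy (b.repr.injective (Finsupp.ext hcon))
      obtain ⟨i, hi⟩ := this
      refine ⟨X i - C (b.repr (g v) i), fun _ => ⟨?_, ?_⟩⟩
      · simp [ev]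
      · simp only [map_sub, ev_X]
        simp only [ev, aeval_C]
        simpa [sub_eq_zero] using hi.symm
  choose f hf using hsep
  set e : MvPolynomial (Fin (finrank ℂ V)) ℂ :=
    ∏ g ∈ (Wf W).filter (fun g => g v ≠ v), f g with he
  have hev : ev b v e ≠ 0 := by
    rw [he, map_prod]
    exact Finset.prod_ne_zero_iff.2 fun g hg => (hf g (Finset.mem_filter.1 hg).2).2
  have heg : ∀ g ∈ W, g v ≠ v → ev b (g v) e = 0 := by
    intro g hg hgv
    rw [he, map_prod]
    exact Finset.prod_eq_zero (Finset.mem_filter.2 ⟨(mem_Wf W g).2 hg, hgv⟩) (hf g hgv).1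
  ext u
  change w u = u
  apply b.repr.injective
  ext j
  have hmem : (X j - C (b.repr v j)) * e ∈ vI b W v := by
    apply mem_vI b W hW hv
    intro g hg
    rw [map_mul]
    by_cases hgv : g v = v
    · rw [hgv]; simp [ev]
    · rw [heg g hg hgv, mul_zero]
  have h1 := dd_vI b W hw hfix u hmem
  have h2 : ev b v (X j - C (b.repr v j)) = 0 := by simp [ev]
  have h3 : ∀ u, dd b v u (X j - C (b.repr v j)) = b.repr u j := by
    intro u; simp [dd, ln]
  rw [dd_mul, dd_mul, h2, h3, h3, zero_mul, zero_mul, add_zero, add_zero] at h1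
  exact mul_right_cancel₀ hev h1

end Stein

/-- If `W` is a finite complex reflection group in `GL(V)`, then the action of `W` on the
regular locus `V^reg` is free: if `v ∈ V^reg` and `w ∈ W` fixes `v`, then `w = 1`. -/
theorem regular_locus_free {V : Type*} [AddCommGroup V] [Module ℂ V]
    [FiniteDimensional ℂ V]
    (W : Subgroup (V ≃ₗ[ℂ] V)) [Finite W]
    (hW : Subgroup.closure {s | s ∈ W ∧ IsComplexReflection s} = W)
    (v : V) (hv : ∀ s ∈ W, IsComplexReflection s → s v ≠ v)
    (w : V ≃ₗ[ℂ] V) (hw : w ∈ W) (hfix : w v = v) :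
    w = 1 := by
  exact Stein.main W hW v hv w hw hfix
end

section
/- Let R be a complex algebra which is a domain whose set of nonzero elements is a left and right Ore set, and let D be its division ring of fractions. Let G be a finite group acting on D by ring automorphisms that map R to itself. Then the invariant ring R^G is a domain whose set of nonzero elements is a left and right Ore set, and the division ring of fractions of R^G is isomorphic to the invariant division ring D^G; concretely, every element of D^G can be written in the form a·b^{-1} with a, b ∈ R^G and b ≠ 0. -/
lemma trace_aux {R D ι : Type*} [Ring R] [DivisionRing D] [Fintype ι]
    (f : R →+* D) (hf : ∀ d : D, ∃ a b : R, d = f a * (f b)⁻¹)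
    (σ : ι → D →+* D) (x : D) (hx : x ≠ 0)
    (h : ∀ r : R, ∑ i, σ i (x * f r) = 0) : (Fintype.card ι : D) = 0 := by
  let V : Submodule D (ι → D) :=
    { carrier := {c | ∀ r : R, ∑ i, c i * σ i (f r) = 0}
      add_mem' := by
        intro a b ha hb r
        simp only [Pi.add_apply, add_mul, Finset.sum_add_distrib]
        rw [ha r, hb r, add_zero]
      zero_mem' := by intro r; simp
      smul_mem' := by
        intro k c hc r
        simp only [Pi.smul_apply, smul_eq_mul, mul_assoc, ← Finset.mul_sum]
        rw [hc r, mul_zero] }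
  let T : R → (V →ₗ[D] V) := fun s =>
    { toFun := fun c => ⟨fun i => c.1 i * σ i (f s), by
        intro r
        have := c.2 (s * r)
        simpa only [map_mul, mul_assoc] using this⟩
      map_add' := by
        intro a b
        ext i
        simp [add_mul]
      map_smul' := by
        intro k a
        ext i
        simp [mul_assoc] }
  obtain ⟨a, b, hab⟩ := hf x⁻¹
  have hb : f b ≠ 0 := by
    intro hb
    rw [hb, inv_zero, mul_zero] at hab
    exact hx (inv_eq_zero.mp hab)
  have hinj : Function.Injective (T b) := by
    intro c c' hcc
    ext i
    have h1 : c.1 i * σ i (f b) = c'.1 i * σ i (f b) := congrFun (congrArg Subtype.val hcc) i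
    exact mul_right_cancel₀ ((map_ne_zero (σ i)).mpr hb) h1
  have hsurj : Function.Surjective (T b) := LinearMap.injective_iff_surjective.mp hinj
  have hc : (fun i => σ i x) ∈ V := by
    intro r
    simpa only [map_mul] using h r
  obtain ⟨c', hc'⟩ := hsurj (T a ⟨_, hc⟩)
  have h2 : ∀ i, c'.1 i = 1 := by
    intro i
    have h1 : c'.1 i * σ i (f b) = σ i x * σ i (f a) := congrFun (congrArg Subtype.val hc') i
    have h3 : f b = x * f a := by
      have : x⁻¹ * f b = f a := by rw [hab, mul_assoc, inv_mul_cancel₀ hb, mul_one]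
      rw [← this, mul_inv_cancel_left₀ hx]
    rw [← map_mul, ← h3] at h1
    exact (mul_eq_right₀ ((map_ne_zero (σ i)).mpr hb)).mp h1
  have h4 := c'.2 1
  simpa [h2] using h4


/-- A set `S` of elements of a ring is a left Ore set if for all `a ∈ A`, `s ∈ S` there
are `b ∈ A`, `t ∈ S` with `t * a = b * s`. -/
def IsLeftOreSet {A : Type*} [Ring A] (S : Set A) : Prop :=
  ∀ a : A, ∀ s ∈ S, ∃ b : A, ∃ t ∈ S, t * a = b * s

/-- A set `S` of elements of a ring is a right Ore set if for all `a ∈ A`, `s ∈ S` there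
are `b ∈ A`, `t ∈ S` with `a * t = s * b`. -/
def IsRightOreSet {A : Type*} [Ring A] (S : Set A) : Prop :=
  ∀ a : A, ∀ s ∈ S, ∃ b : A, ∃ t ∈ S, a * t = s * b

/-- `D` is a division ring of fractions of `A` (via the embedding `f`): `f` is injective and
every element of `D` is a right fraction `f a * (f b)⁻¹` with `a, b ∈ A`, `b ≠ 0`. -/
structure IsDivisionRingOfFractions (A D : Type*) [Ring A] [DivisionRing D]
    (f : A →+* D) : Prop where
  injective : Function.Injective f
  exists_frac : ∀ d : D, ∃ a b : A, b ≠ 0 ∧ d = f a * (f b)⁻¹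

/-- The subring `R^G` of elements of `R` whose image in `D` under `f` is `G`-invariant. -/
def invariantSubring {R D : Type*} [Ring R] [DivisionRing D] (G : Type*) [Group G]
    [MulSemiringAction G D] (f : R →+* D) : Subring R where
  carrier := {r | ∀ g : G, g • f r = f r}
  mul_mem' := by intro a b ha hb g; rw [map_mul, smul_mul', ha g, hb g]
  one_mem' := by intro g; rw [map_one, smul_one]
  add_mem' := by intro a b ha hb g; rw [map_add, smul_add, ha g, hb g]
  zero_mem' := by intro g; rw [map_zero, smul_zero]
  neg_mem' := by intro a ha g; rw [map_neg, smul_neg, ha g]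

/-- Let `R` be a complex Ore domain with division ring of fractions `D`, and let a finite
group `G` act on `D` by ring automorphisms mapping `R` to itself.  Then `R^G` is an Ore
domain and the division ring of fractions of `R^G` is `D^G`: every `G`-invariant element
of `D` is a right fraction `(f a) * (f b)⁻¹` with `a, b ∈ R^G`, `b ≠ 0`. -/
theorem invariants_fraction_ring {R D : Type*} [Ring R] [IsDomain R] [Algebra ℂ R]
    [DivisionRing D]
    (G : Type*) [Group G] [Finite G] [MulSemiringAction G D]
    (f : R →+* D) (hf : IsDivisionRingOfFractions R D f)
    (hl : IsLeftOreSet {a : R | a ≠ 0}) (hr : IsRightOreSet {a : R | a ≠ 0})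
    (hstab : ∀ (g : G) (r : R), ∃ r' : R, g • f r = f r') :
    IsDomain (invariantSubring G f) ∧
    IsLeftOreSet {a : invariantSubring G f | a ≠ 0} ∧
    IsRightOreSet {a : invariantSubring G f | a ≠ 0} ∧
    ∀ d : D, (∀ g : G, g • d = d) →
      ∃ a b : invariantSubring G f, b ≠ 0 ∧ d = f (a : R) * (f (b : R))⁻¹ := by


  classical
  haveI := Fintype.ofFinite G
  obtain ⟨hinj, hfrac⟩ := hf
  have hcard : (Fintype.card G : D) ≠ 0 := by
    have h1 : ((Fintype.card G : ℂ)) ≠ 0 := Nat.cast_ne_zero.mpr Fintype.card_ne_zero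
    have h2 := (map_ne_zero_iff (algebraMap ℂ R) (algebraMap ℂ R).injective).mpr h1
    have h3 := (map_ne_zero_iff f hinj).mpr h2
    simpa using h3
  have hf0 : ∀ r : R, r ≠ 0 → f r ≠ 0 := fun r hr => (map_ne_zero_iff f hinj).mpr hr
  -- the trace
  choose act hact using hstab
  have htr : ∀ r : R, ∃ t : invariantSubring G f, f (t : R) = ∑ g : G, g • f r := by
    intro r
    have e : f (∑ g : G, act g r) = ∑ g : G, g • f r := by
      rw [map_sum]; exact Finset.sum_congr rfl fun g _ => (hact g r).symm
    refine ⟨⟨∑ g : G, act g r, ?_⟩, e⟩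
    intro h
    rw [e, Finset.smul_sum]
    simp only [← mul_smul]
    exact Fintype.sum_equiv (Equiv.mulLeft h) _ _ (fun g => rfl)
  choose tr htr using htr
  have hR : ∀ x : R, x ≠ 0 → ∃ r, tr (x * r) ≠ 0 := by
    intro x hx
    by_contra! hcon
    refine hcard (trace_aux f (fun d => ?_) (fun g : G => MulSemiringAction.toRingHom G D g)
      (f x) (hf0 x hx) ?_)
    · obtain ⟨a, b, -, h⟩ := hfrac d
      exact ⟨a, b, h⟩
    · intro r
      have := htr (x * r)
      rw [hcon r] at this
      simpa using this.symm
  have hL : ∀ x : R, x ≠ 0 → ∃ r, tr (r * x) ≠ 0 := by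
    intro x hx
    by_contra! hcon
    have key := trace_aux (RingHom.op f) (fun d => ?_)
      (fun g : G => RingHom.op (MulSemiringAction.toRingHom G D g))
      (MulOpposite.op (f x)) (by simpa using hf0 x hx) ?_
    · apply hcard
      have := congrArg MulOpposite.unop key
      simpa using this
    · obtain ⟨a, b, hb, h⟩ := hfrac d.unop
      obtain ⟨b', t, ht, e⟩ := hl a b hb
      refine ⟨MulOpposite.op b', MulOpposite.op t, ?_⟩
      apply MulOpposite.unop_injective
      have e' : f t * f a = f b' * f b := by rw [← map_mul, e, map_mul]
      simp only [MulOpposite.unop_mul, MulOpposite.unop_inv, RingHom.op_apply_apply,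
        Function.comp, MulOpposite.unop_op]
      rw [h, eq_inv_mul_iff_mul_eq₀ (hf0 t ht), ← mul_assoc, e', mul_assoc,
        mul_inv_cancel₀ (hf0 b hb), mul_one]
    · intro r
      have := htr (r.unop * x)
      rw [hcon] at this
      apply MulOpposite.unop_injective
      simpa using this.symm
  have hfracG : ∀ d : D, (∀ g : G, g • d = d) →
      ∃ a b : invariantSubring G f, b ≠ 0 ∧ d = f (a : R) * (f (b : R))⁻¹ := by
    intro d hd
    obtain ⟨a, b, hb, h⟩ := hfrac d
    obtain ⟨r, hr⟩ := hR b hb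
    refine ⟨tr (a * r), tr (b * r), hr, ?_⟩
    have h1 : f (tr (b * r) : R) ≠ 0 := hf0 _ (by simpa using hr)
    rw [eq_mul_inv_iff_mul_eq₀ h1, htr, htr, Finset.mul_sum]
    refine Finset.sum_congr rfl fun g _ => ?_
    conv_lhs => rw [← hd g]
    rw [← smul_mul', map_mul, map_mul, ← mul_assoc, h, mul_assoc (f a),
      inv_mul_cancel₀ (hf0 b hb), mul_one]
  refine ⟨inferInstance, ?_, ?_, hfracG⟩
  · intro a s hs
    have hs' : (s : R) ≠ 0 := by simpa using hs
    obtain ⟨b, t, ht, e⟩ := hl a s hs'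
    obtain ⟨r, hr⟩ := hL t ht
    refine ⟨tr (r * b), tr (r * t), hr, ?_⟩
    apply Subtype.ext
    apply hinj
    rw [Subring.coe_mul, Subring.coe_mul, map_mul, map_mul, htr, htr, Finset.sum_mul,
      Finset.sum_mul]
    refine Finset.sum_congr rfl fun g _ => ?_
    conv_lhs => rw [← a.2 g]
    conv_rhs => rw [← s.2 g]
    rw [← smul_mul', ← smul_mul', ← map_mul, ← map_mul, mul_assoc, mul_assoc, e]
  · intro a s hs
    have hs' : (s : R) ≠ 0 := by simpa using hs
    have hs0 := hf0 _ hs'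
    obtain ⟨u, v, hv, e⟩ := hfracG ((f s)⁻¹ * f a) (by
      intro g
      rw [smul_mul', smul_inv'', s.2 g, a.2 g])
    refine ⟨u, v, hv, ?_⟩
    have hv0 : f (v : R) ≠ 0 := hf0 _ (by simpa using hv)
    apply Subtype.ext
    apply hinj
    rw [Subring.coe_mul, Subring.coe_mul, map_mul, map_mul]
    rw [eq_mul_inv_iff_mul_eq₀ hv0] at e
    rw [← e, mul_assoc, mul_inv_cancel_left₀ hs0]
end

section
/- Let U be a domain and S ⊆ U \ {0} a multiplicative submonoid whose elements pairwise commute with each other, and which is a left and right Ore set in U. If the Ore localization U[S^{-1}] is a domain whose set of nonzero elements is a left and right Ore set, then the set of nonzero elements of U is itself a left and right Ore set, i.e. U is an Ore domain. -/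
/-- `B` is an Ore localization of `A` at the submonoid `M` (via the embedding `g`):
`g` is injective, the elements of `M` become units, and every element of `B` is a
right fraction `g a * (g m)⁻¹`, expressed as `b * g m = g a`. -/
structure IsOreLocalizationOf (A B : Type*) [Ring A] [Ring B] (M : Submonoid A)
    (g : A →+* B) : Prop where
  injective : Function.Injective g
  isUnit : ∀ m ∈ M, IsUnit (g m)
  exists_frac : ∀ b : B, ∃ a : A, ∃ m ∈ M, b * g m = g a

/-- Let `U` be a domain and `S ⊆ U \ {0}` a multiplicative submonoid of pairwise commuting
elements which is a left and right Ore set in `U`.  If the Ore localization `U[S⁻¹]` is a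
domain whose nonzero elements form a left and right Ore set, then `U` is an Ore domain. -/
theorem ore_domain_of_ore_localization {U B : Type*} [Ring U] [IsDomain U] [Ring B]
    (M : Submonoid U) (hM : (M : Set U) ⊆ {u : U | u ≠ 0})
    (hcomm : ∀ s ∈ M, ∀ t ∈ M, s * t = t * s)
    (hMl : IsLeftOreSet (M : Set U)) (hMr : IsRightOreSet (M : Set U))
    (g : U →+* B) (hg : IsOreLocalizationOf U B M g)
    (hB : IsDomain B)
    (hBl : IsLeftOreSet {b : B | b ≠ 0}) (hBr : IsRightOreSet {b : B | b ≠ 0}) :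
    IsLeftOreSet {u : U | u ≠ 0} ∧ IsRightOreSet {u : U | u ≠ 0} := by
  have hM0 : ∀ m ∈ M, m ≠ 0 := fun m hm => hM hm
  have hg0 : ∀ u : U, g u = 0 → u = 0 := fun u hu => hg.injective (by rw [hu, map_zero])
  have lfrac : ∀ b : B, ∃ a : U, ∃ m ∈ M, g m * b = g a := by
    intro b
    obtain ⟨a, m, hm, h⟩ := hg.exists_frac b
    obtain ⟨c, n, hn, h'⟩ := hMl a m hm
    refine ⟨c, n, hn, ?_⟩
    apply (hg.isUnit m hm).mul_right_cancel
    rw [mul_assoc, h, ← map_mul, h', map_mul]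
  constructor
  · intro u s hs
    obtain ⟨v, t, ht, h⟩ := hBl (g u) (g s) (fun h => hs (hg0 s h))
    obtain ⟨a, m, hm, h1⟩ := lfrac t
    obtain ⟨c, n, hn, h2⟩ := lfrac (g m * v)
    refine ⟨c, n * a, ?_, ?_⟩
    · refine mul_ne_zero (hM0 n hn) ?_
      rintro rfl
      rw [map_zero] at h1
      rcases mul_eq_zero.mp h1 with h3 | h3
      · exact hM0 m hm (hg0 m h3)
      · exact ht h3
    · apply hg.injective
      simp only [map_mul]
      rw [← h1, ← h2]
      simp only [mul_assoc]
      rw [h]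
  · intro u s hs
    obtain ⟨v, t, ht, h⟩ := hBr (g u) (g s) (fun h => hs (hg0 s h))
    obtain ⟨a, m, hm, h1⟩ := hg.exists_frac t
    obtain ⟨c, n, hn, h2⟩ := hg.exists_frac (v * g m)
    refine ⟨c, a * n, ?_, ?_⟩
    · refine mul_ne_zero ?_ (hM0 n hn)
      rintro rfl
      rw [map_zero] at h1
      rcases mul_eq_zero.mp h1 with h3 | h3
      · exact ht h3
      · exact hM0 m hm (hg0 m h3)
    · apply hg.injective
      simp only [map_mul]
      rw [← h1, ← h2]
      simp only [← mul_assoc]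
      rw [h]
end

section
/- Let n ≥ 1 and let L = ℂ[x_1^{±1}, …, x_n^{±1}] be the ring of Laurent polynomials in n variables over ℂ. Let the group B_n = (ℤ/2ℤ)^n ⋊ S_n act on L by ℂ-algebra automorphisms, where S_n permutes the variables and the i-th generator of (ℤ/2ℤ)^n sends x_i to -x_i^{-1} and fixes x_j for j ≠ i. Set s_i = e_i(x_1 - x_1^{-1}, …, x_n - x_n^{-1}) for i = 1, …, n, where e_i is the i-th elementary symmetric polynomial. Then the invariant ring L^{B_n} equals the ℂ-subalgebra generated by s_1, …, s_n, and s_1, …, s_n are algebraically independent over ℂ (so L^{B_n} is a polynomial algebra in n variables). -/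
noncomputable section

/-- The Laurent polynomial ring `ℂ[x₁^{±1}, …, xₙ^{±1}]`, realized as the group algebra
of `ℤⁿ` over `ℂ`. -/
abbrev LaurentAlg (n : ℕ) := AddMonoidAlgebra ℂ (Fin n →₀ ℤ)

/-- The variable `xᵢ`. -/
def Xvar {n : ℕ} (i : Fin n) : LaurentAlg n :=
  AddMonoidAlgebra.single (Finsupp.single i 1) 1

/-- The inverse variable `xᵢ⁻¹`. -/
def Xinv {n : ℕ} (i : Fin n) : LaurentAlg n :=
  AddMonoidAlgebra.single (Finsupp.single i (-1)) 1

/-- `sᵢ = eᵢ(x₁ - x₁⁻¹, …, xₙ - xₙ⁻¹)`, the `i`-th elementary symmetric polynomial in the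
`xⱼ - xⱼ⁻¹` (here `i : Fin n` corresponds to `e_{i+1}`). -/
def sB {n : ℕ} (i : Fin n) : LaurentAlg n :=
  ∑ t ∈ Finset.powersetCard ((i : ℕ) + 1) Finset.univ,
    ∏ j ∈ t, (Xvar j - Xinv j)

lemma X_mul_inv {n : ℕ} (i : Fin n) : Xvar i * Xinv i = 1 := by
  simp [Xvar, Xinv, AddMonoidAlgebra.single_mul_single, ← Finsupp.single_add,
    AddMonoidAlgebra.one_def]

/-- The element `xᵢ - xᵢ⁻¹`. -/
def Yv {n : ℕ} (i : Fin n) : LaurentAlg n := Xvar i - Xinv i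

lemma X_sq {n : ℕ} (i : Fin n) : Xvar i * Xvar i = Xvar i * Yv i + 1 := by
  have := X_mul_inv i
  unfold Yv
  linear_combination this

/-- Intermediate subalgebras. -/
def AS {n : ℕ} (S : Finset (Fin n)) : Subalgebra ℂ (LaurentAlg n) :=
  Algebra.adjoin ℂ (Set.range Yv ∪ Xvar '' {i | i ∉ S})

lemma Y_mem {n : ℕ} (S : Finset (Fin n)) (i : Fin n) : Yv i ∈ AS S :=
  Algebra.subset_adjoin (Or.inl ⟨i, rfl⟩)

lemma single_mem {n : ℕ} (k : Fin n →₀ ℤ) :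
    (AddMonoidAlgebra.single k 1 : LaurentAlg n) ∈ AS (∅ : Finset (Fin n)) := by
  have hX : ∀ i : Fin n, Xvar i ∈ AS (∅ : Finset (Fin n)) := fun i =>
    Algebra.subset_adjoin (Or.inr ⟨i, by simp, rfl⟩)
  have hI : ∀ i : Fin n, Xinv i ∈ AS (∅ : Finset (Fin n)) := fun i => by
    have : Xinv i = Xvar i - Yv i := by simp [Yv]
    rw [this]
    exact sub_mem (hX i) (Y_mem _ i)
  induction k using Finsupp.induction_linear with
  | zero => exact one_mem _
  | add f g hf hg =>
    have := mul_mem hf hg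
    rwa [AddMonoidAlgebra.single_mul_single, one_mul] at this
  | single i z =>
    obtain ⟨m, rfl | rfl⟩ := z.eq_nat_or_neg
    · have := pow_mem (hX i) m
      simpa [Xvar, AddMonoidAlgebra.single_pow] using this
    · have := pow_mem (hI i) m
      simpa [Xinv, AddMonoidAlgebra.single_pow] using this

lemma AS_empty {n : ℕ} (f : LaurentAlg n) : f ∈ AS (∅ : Finset (Fin n)) := by
  induction f using AddMonoidAlgebra.induction_linear with
  | zero => exact zero_mem _
  | add f g hf hg => exact add_mem hf hg
  | single k c =>
    have := (AS (∅ : Finset (Fin n))).smul_mem (single_mem k) c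
    simpa using this

lemma AS_decomp {n : ℕ} (S : Finset (Fin n)) (i : Fin n) (f : LaurentAlg n) (hf : f ∈ AS S) :
    ∃ a ∈ AS (insert i S), ∃ b ∈ AS (insert i S), f = a + b * Xvar i := by
  induction hf using Algebra.adjoin_induction with
  | mem x hx =>
    rcases hx with ⟨j, rfl⟩ | ⟨j, hj, rfl⟩
    · exact ⟨_, Y_mem _ j, 0, zero_mem _, by simp⟩
    · by_cases h : j = i
      · subst h
        exact ⟨0, zero_mem _, 1, one_mem _, by simp⟩
      · refine ⟨_, Algebra.subset_adjoin (Or.inr ⟨j, ?_, rfl⟩), 0, zero_mem _, by simp⟩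
        simp only [Set.mem_setOf_eq] at hj
        simp [h, hj]
  | algebraMap r => exact ⟨_, Subalgebra.algebraMap_mem _ r, 0, zero_mem _, by simp⟩
  | add x y _ _ hx hy =>
    obtain ⟨a, ha, b, hb, rfl⟩ := hx
    obtain ⟨c, hc, d, hd, rfl⟩ := hy
    exact ⟨a + c, add_mem ha hc, b + d, add_mem hb hd, by ring⟩
  | mul x y _ _ hx hy =>
    obtain ⟨a, ha, b, hb, rfl⟩ := hx
    obtain ⟨c, hc, d, hd, rfl⟩ := hy
    refine ⟨a * c + b * d, add_mem (mul_mem ha hc) (mul_mem hb hd),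
      a * d + b * c + b * d * Yv i, add_mem (add_mem (mul_mem ha hd) (mul_mem hb hc))
        (mul_mem (mul_mem hb hd) (Y_mem _ i)), ?_⟩
    linear_combination b * d * X_sq i

lemma T_Xinv {n : ℕ} (T : LaurentAlg n →ₐ[ℂ] LaurentAlg n) (i : Fin n) (u : LaurentAlg n)
    (h : T (Xvar i) * u = 1) : T (Xinv i) = u := by
  have h1 : T (Xvar i) * T (Xinv i) = 1 := by rw [← map_mul, X_mul_inv, map_one]
  linear_combination (u) * h1 - T (Xinv i) * h

lemma E_Y {n : ℕ} (T : LaurentAlg n →ₐ[ℂ] LaurentAlg n) (i : Fin n)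
    (h : T (Xvar i) = -Xinv i) (h' : ∀ j, j ≠ i → T (Xvar j) = Xvar j) (j : Fin n) :
    T (Yv j) = Yv j := by
  by_cases hj : j = i
  · subst hj
    have := T_Xinv T j (-Xvar j) (by rw [h]; linear_combination X_mul_inv j)
    rw [Yv, map_sub, this, h]; ring
  · have := T_Xinv T j (Xinv j) (by rw [h' j hj, X_mul_inv])
    rw [Yv, map_sub, this, h' j hj]

lemma AS_step {n : ℕ} (T : LaurentAlg n →ₐ[ℂ] LaurentAlg n) (i : Fin n)
    (h : T (Xvar i) = -Xinv i) (h' : ∀ j, j ≠ i → T (Xvar j) = Xvar j)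
    (S : Finset (Fin n)) (f : LaurentAlg n) (hf : f ∈ AS S) (hT : T f = f) :
    f ∈ AS (insert i S) := by
  obtain ⟨a, ha, b, hb, hab⟩ := AS_decomp S i f hf
  have fix : ∀ a ∈ AS (insert i S), T a = a := by
    intro a ha
    induction ha using Algebra.adjoin_induction with
    | mem x hx =>
      rcases hx with ⟨j, rfl⟩ | ⟨j, hj, rfl⟩
      · exact E_Y T i h h' j
      · apply h'
        rintro rfl
        simp at hj
    | algebraMap r => exact T.commutes r
    | add x y _ _ hx hy => rw [map_add, hx, hy]
    | mul x y _ _ hx hy => rw [map_mul, hx, hy]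
  have e : f = a - b * Xinv i := by
    rw [← hT, hab, map_add, map_mul, fix a ha, fix b hb, h]; ring
  have e2 : (2 : ℂ) • f = (2 : ℂ) • a + b * Yv i := by
    rw [two_smul, two_smul, Yv]; linear_combination hab + e
  have e3 : f = (2 : ℂ)⁻¹ • ((2 : ℂ) • a + b * Yv i) := by
    rw [← e2, smul_smul]; norm_num
  rw [e3]
  exact Subalgebra.smul_mem _ (add_mem (Subalgebra.smul_mem _ ha _)
    (mul_mem hb (Y_mem _ i))) _

/-- Substitution of `Yv`. -/
def phi (n : ℕ) : MvPolynomial (Fin n) ℂ →ₐ[ℂ] LaurentAlg n := MvPolynomial.aeval Yv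

lemma exists_eval {n : ℕ} (c : Fin n → ℂ) :
    ∃ ev : LaurentAlg n →ₐ[ℂ] ℂ, ∀ i, ev (Yv i) = c i := by
  have h : ∀ i, ∃ x : ℂˣ, (x : ℂ) - ((x⁻¹ : ℂˣ) : ℂ) = c i := by
    intro i
    obtain ⟨s, hs'⟩ := IsAlgClosed.exists_pow_nat_eq (c i ^ 2 + 4) (n := 2) (by norm_num)
    have hs : c i ^ 2 + 4 = s ^ 2 := hs'.symm
    have h0 : (c i + s) / 2 ≠ 0 := by
      intro h0
      have : s = - c i := by linear_combination 2 * h0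
      rw [this] at hs
      have : (4 : ℂ) = 0 := by linear_combination hs
      norm_num at this
    refine ⟨Units.mk0 _ h0, ?_⟩
    simp only [Units.val_mk0, Units.val_inv_eq_inv_val]
    have h1 := mul_inv_cancel₀ h0
    apply mul_left_cancel₀ h0
    linear_combination -h1 - hs / 4
  choose x hx using h
  let m : Multiplicative (Fin n →₀ ℤ) →* ℂ :=
    { toFun := fun k => ((∏ i, x i ^ (Multiplicative.toAdd k i) : ℂˣ) : ℂ)
      map_one' := by simp
      map_mul' := fun a b => by simp [zpow_add, Finset.prod_mul_distrib] }
  refine ⟨AddMonoidAlgebra.lift ℂ ℂ _ m, fun i => ?_⟩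
  have hs : ∀ z : ℤ, m (Multiplicative.ofAdd (Finsupp.single i z)) = ((x i ^ z : ℂˣ) : ℂ) := by
    intro z
    change ((∏ j, x j ^ (Finsupp.single i z j) : ℂˣ) : ℂ) = _
    congr 1
    rw [Finset.prod_eq_single i]
    · simp
    · intro j _ hj
      simp [Finsupp.single_apply, hj.symm]
    · simp
  rw [← hx i, Yv, map_sub, Xvar, Xinv, AddMonoidAlgebra.lift_single, AddMonoidAlgebra.lift_single,
    hs, hs]
  simp

lemma phi_inj (n : ℕ) : Function.Injective (phi n) := by
  rw [injective_iff_map_eq_zero]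
  intro p hp
  apply MvPolynomial.funext
  intro c
  obtain ⟨ev, hev⟩ := exists_eval c
  have h1 : ev (phi n p) = MvPolynomial.aeval c p := by
    have : ev.comp (phi n) = MvPolynomial.aeval c := by
      ext i
      simp [phi, hev]
    rw [← this]; rfl
  rw [hp, map_zero] at h1
  rw [map_zero, ← MvPolynomial.coe_aeval_eq_eval]
  exact h1.symm

lemma phi_esymm {n : ℕ} (i : Fin n) :
    phi n (MvPolynomial.esymm (Fin n) ℂ (i + 1)) = sB i := by
  simp [phi, MvPolynomial.esymm, sB, Yv]

lemma aeval_sB {n : ℕ} (p : MvPolynomial (Fin n) ℂ) :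
    MvPolynomial.aeval (sB (n := n)) p
      = phi n (MvPolynomial.esymmAlgHom (Fin n) ℂ n p : MvPolynomial (Fin n) ℂ) := by
  have : MvPolynomial.aeval (sB (n := n)) = ((phi n).comp
      ((MvPolynomial.symmetricSubalgebra (Fin n) ℂ).val)).comp
        (MvPolynomial.esymmAlgHom (Fin n) ℂ n) := by
    ext1 i
    simp [MvPolynomial.esymmAlgHom, phi_esymm]
  rw [this]; rfl

lemma P_Y {n : ℕ} (T : LaurentAlg n →ₐ[ℂ] LaurentAlg n) (σ : Equiv.Perm (Fin n))
    (h : ∀ j, T (Xvar j) = Xvar (σ j)) (j : Fin n) : T (Yv j) = Yv (σ j) := by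
  have := T_Xinv T j (Xinv (σ j)) (by rw [h, X_mul_inv])
  rw [Yv, map_sub, this, h, Yv]

lemma P_phi {n : ℕ} (T : LaurentAlg n →ₐ[ℂ] LaurentAlg n) (σ : Equiv.Perm (Fin n))
    (h : ∀ j, T (Xvar j) = Xvar (σ j)) (p : MvPolynomial (Fin n) ℂ) :
    T (phi n p) = phi n (MvPolynomial.rename σ p) := by
  have : T.comp (phi n) = (phi n).comp (MvPolynomial.rename σ) := by
    ext1 i
    simp [phi, P_Y T σ h]
  exact DFunLike.congr_fun this p

lemma E_phi {n : ℕ} (T : LaurentAlg n →ₐ[ℂ] LaurentAlg n) (i : Fin n)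
    (h : T (Xvar i) = -Xinv i) (h' : ∀ j, j ≠ i → T (Xvar j) = Xvar j)
    (p : MvPolynomial (Fin n) ℂ) :
    T (phi n p) = phi n p := by
  have : T.comp (phi n) = phi n := by
    ext1 j
    simp [phi, E_Y T i h h']
  exact DFunLike.congr_fun this p

/-- The invariants of the Laurent polynomial ring under the hyperoctahedral group
`Bₙ = (ℤ/2ℤ)ⁿ ⋊ Sₙ`, where `Sₙ` permutes the variables and the `i`-th sign generator sends
`xᵢ` to `-xᵢ⁻¹`, form the polynomial algebra on the algebraically independent elements
`sᵢ = eᵢ(x₁ - x₁⁻¹, …, xₙ - xₙ⁻¹)`, `i = 1, …, n`. -/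
theorem invariants_Bn (n : ℕ) (hn : 1 ≤ n)
    (P : Equiv.Perm (Fin n) → (LaurentAlg n ≃ₐ[ℂ] LaurentAlg n))
    (hP : ∀ σ j, P σ (Xvar j) = Xvar (σ j))
    (E : Fin n → (LaurentAlg n ≃ₐ[ℂ] LaurentAlg n))
    (hE : ∀ i, E i (Xvar i) = -Xinv i ∧ ∀ j, j ≠ i → E i (Xvar j) = Xvar j) :
    {f : LaurentAlg n | (∀ σ, P σ f = f) ∧ (∀ i, E i f = f)} =
      (Algebra.adjoin ℂ (Set.range (sB (n := n))) : Set (LaurentAlg n)) ∧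
    AlgebraicIndependent ℂ (sB (n := n)) := by
  have hbij := MvPolynomial.esymmAlgHom_fin_bijective ℂ n
  refine ⟨?_, ?_⟩
  · ext f
    rw [Algebra.adjoin_range_eq_range_aeval]
    simp only [Set.mem_setOf_eq, SetLike.mem_coe, AlgHom.mem_range]
    constructor
    · rintro ⟨hp, he⟩
      have hS : ∀ S : Finset (Fin n), f ∈ AS S := by
        intro S
        induction S using Finset.induction_on with
        | empty => exact AS_empty f
        | insert i S _ ih =>
          exact AS_step (E i : LaurentAlg n →ₐ[ℂ] LaurentAlg n) i (hE i).1 (hE i).2 S f ih (he i)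
      have hu := hS Finset.univ
      rw [AS] at hu
      simp only [Finset.mem_univ, not_true_eq_false, Set.setOf_false, Set.image_empty,
        Set.union_empty, Algebra.adjoin_range_eq_range_aeval] at hu
      obtain ⟨q, rfl⟩ := hu
      have hq : q.IsSymmetric := by
        intro σ
        apply phi_inj n
        rw [← P_phi (P σ : LaurentAlg n →ₐ[ℂ] LaurentAlg n) σ (hP σ)]
        exact hp σ
      obtain ⟨r, hr⟩ := hbij.2 ⟨q, hq⟩
      refine ⟨r, ?_⟩
      rw [aeval_sB, hr]
      rfl
    · rintro ⟨r, rfl⟩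
      rw [aeval_sB]
      refine ⟨fun σ => ?_, fun i => ?_⟩
      · refine (P_phi (P σ : LaurentAlg n →ₐ[ℂ] LaurentAlg n) σ (hP σ) _).trans ?_
        rw [(MvPolynomial.esymmAlgHom (Fin n) ℂ n r).2 σ]
      · exact E_phi (E i : LaurentAlg n →ₐ[ℂ] LaurentAlg n) i (hE i).1 (hE i).2 _
  · intro p q hpq
    rw [aeval_sB, aeval_sB] at hpq
    exact hbij.1 (Subtype.ext (phi_inj n hpq))

end
end

section
/- Let n ≥ 2 and let L = ℂ[x_1^{±1}, …, x_n^{±1}] be the ring of Laurent polynomials in n variables over ℂ. Let D_n be the group generated by the permutation action of S_n on the variables together with all transformations that invert an even number of variables (i.e. semidirect product of S_n with the subgroup of (ℤ/2ℤ)^n of sign vectors with trivial product), acting by ℂ-algebra automorphisms where a sign vector (d_1,…,d_n) with Σd_i even sends x_i to x_i^{-1} exactly when d_i = 1. Set s_i = e_i(x_1 + x_1^{-1}, …, x_n + x_n^{-1}) for i = 1, …, n-1, and Δ_n^± = (1/2)·(∏_{i=1}^n (x_i + x_i^{-1}) ± ∏_{i=1}^n (x_i - x_i^{-1})). Then the invariant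 ring L^{D_n} equals the ℂ-subalgebra generated by s_1, …, s_{n-1}, Δ_n^+ and Δ_n^-. -/
noncomputable section

/-- `s_k = e_k(x₁ + x₁⁻¹, …, xₙ + xₙ⁻¹)`, the `k`-th elementary symmetric polynomial
in the elements `xⱼ + xⱼ⁻¹`. -/
def sD {n : ℕ} (k : ℕ) : LaurentAlg n :=
  ∑ t ∈ Finset.powersetCard k Finset.univ, ∏ j ∈ t, (Xvar j + Xinv j)

/-- `Δₙ⁺ = (1/2)(∏ᵢ (xᵢ + xᵢ⁻¹) + ∏ᵢ (xᵢ - xᵢ⁻¹))`. -/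
def deltaPlus (n : ℕ) : LaurentAlg n :=
  algebraMap ℂ (LaurentAlg n) (1 / 2) *
    (∏ i : Fin n, (Xvar i + Xinv i) + ∏ i : Fin n, (Xvar i - Xinv i))

/-- `Δₙ⁻ = (1/2)(∏ᵢ (xᵢ + xᵢ⁻¹) - ∏ᵢ (xᵢ - xᵢ⁻¹))`. -/
def deltaMinus (n : ℕ) : LaurentAlg n :=
  algebraMap ℂ (LaurentAlg n) (1 / 2) *
    (∏ i : Fin n, (Xvar i + Xinv i) - ∏ i : Fin n, (Xvar i - Xinv i))

open MvPolynomial in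
theorem aux_sD {n : ℕ} (k : ℕ) :
    (sD k : LaurentAlg n) = aeval (fun i => Xvar i + Xinv i) (esymm (Fin n) ℂ k) := by
  simp [sD, esymm, map_sum, map_prod]

theorem aux_mul {n : ℕ} (i : Fin n) : (Xvar i * Xinv i : LaurentAlg n) = 1 := by
  simp [Xvar, Xinv, AddMonoidAlgebra.single_mul_single, ← Finsupp.single_add,
    AddMonoidAlgebra.one_def]

theorem aux_ginv {n : ℕ} (σ : Equiv.Perm (Fin n)) (d : Fin n → Bool)
    (g : LaurentAlg n ≃ₐ[ℂ] LaurentAlg n)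
    (hg : ∀ j, g (Xvar j) = if d j then Xinv (σ j) else Xvar (σ j)) (j : Fin n) :
    g (Xinv j) = if d j then Xvar (σ j) else Xinv (σ j) := by
  have h1 : g (Xvar j) * g (Xinv j) = 1 := by rw [← map_mul, aux_mul, map_one]
  rw [hg] at h1
  have h2 := aux_mul (σ j)
  split_ifs at h1 ⊢ with h
  · calc g (Xinv j) = (Xvar (σ j) * Xinv (σ j)) * g (Xinv j) := by rw [h2, one_mul]
      _ = Xvar (σ j) * (Xinv (σ j) * g (Xinv j)) := by ring
      _ = _ := by rw [h1, mul_one]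
  · calc g (Xinv j) = (Xvar (σ j) * Xinv (σ j)) * g (Xinv j) := by rw [h2, one_mul]
      _ = Xinv (σ j) * (Xvar (σ j) * g (Xinv j)) := by ring
      _ = _ := by rw [h1, mul_one]

theorem aux_gy {n : ℕ} (σ : Equiv.Perm (Fin n)) (d : Fin n → Bool)
    (g : LaurentAlg n ≃ₐ[ℂ] LaurentAlg n)
    (hg : ∀ j, g (Xvar j) = if d j then Xinv (σ j) else Xvar (σ j)) (j : Fin n) :
    g (Xvar j + Xinv j) = Xvar (σ j) + Xinv (σ j) := by
  rw [map_add, hg, aux_ginv σ d g hg]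
  split_ifs <;> ring

theorem aux_gz {n : ℕ} (σ : Equiv.Perm (Fin n)) (d : Fin n → Bool)
    (g : LaurentAlg n ≃ₐ[ℂ] LaurentAlg n)
    (hg : ∀ j, g (Xvar j) = if d j then Xinv (σ j) else Xvar (σ j)) (j : Fin n) :
    g (Xvar j - Xinv j) =
      algebraMap ℂ (LaurentAlg n) (if d j then -1 else 1) * (Xvar (σ j) - Xinv (σ j)) := by
  rw [map_sub, hg, aux_ginv σ d g hg]
  split_ifs
  · rw [map_neg, map_one]; ring
  · rw [map_one]; ring

open MvPolynomial in
theorem aux_gA {n : ℕ} (σ : Equiv.Perm (Fin n)) (d : Fin n → Bool)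
    (g : LaurentAlg n ≃ₐ[ℂ] LaurentAlg n)
    (hg : ∀ j, g (Xvar j) = if d j then Xinv (σ j) else Xvar (σ j))
    (p : MvPolynomial (Fin n) ℂ) :
    g (aeval (fun i => (Xvar i + Xinv i : LaurentAlg n)) p) =
      aeval (fun i => (Xvar i + Xinv i : LaurentAlg n)) (rename σ p) := by
  rw [aeval_rename]
  have : (g : LaurentAlg n →ₐ[ℂ] LaurentAlg n).comp
      (aeval (fun i => (Xvar i + Xinv i : LaurentAlg n))) =
      aeval ((fun i => (Xvar i + Xinv i : LaurentAlg n)) ∘ σ) := by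
    refine MvPolynomial.algHom_ext fun i => ?_
    simpa using aux_gy σ d g hg i
  exact congrArg (fun φ => φ p) this

theorem aux_sign {n : ℕ} (d : Fin n → Bool)
    (hd : Even (Finset.univ.filter (fun i => d i = true)).card) :
    ∏ i, (if d i then (-1 : ℂ) else 1) = 1 := by
  rw [Finset.prod_ite]
  simp [hd.neg_one_pow]

open MvPolynomial in
theorem aux_fix {n : ℕ} (σ : Equiv.Perm (Fin n)) (d : Fin n → Bool)
    (hd : Even (Finset.univ.filter (fun i => d i = true)).card)
    (g : LaurentAlg n ≃ₐ[ℂ] LaurentAlg n)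
    (hg : ∀ j, g (Xvar j) = if d j then Xinv (σ j) else Xvar (σ j)) :
    (∀ k, g (sD k) = sD k) ∧ g (deltaPlus n) = deltaPlus n ∧ g (deltaMinus n) = deltaMinus n := by
  have hy : g (∏ i : Fin n, (Xvar i + Xinv i)) = ∏ i : Fin n, (Xvar i + Xinv i) := by
    rw [map_prod]
    simp_rw [aux_gy σ d g hg]
    exact Equiv.prod_comp σ (fun i => (Xvar i + Xinv i : LaurentAlg n))
  have hz : g (∏ i : Fin n, (Xvar i - Xinv i)) = ∏ i : Fin n, (Xvar i - Xinv i) := by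
    rw [map_prod]
    simp_rw [aux_gz σ d g hg]
    rw [Finset.prod_mul_distrib, ← map_prod, aux_sign d hd, map_one, one_mul]
    exact Equiv.prod_comp σ (fun i => (Xvar i - Xinv i : LaurentAlg n))
  refine ⟨fun k => ?_, ?_, ?_⟩
  · rw [aux_sD, aux_gA σ d g hg, rename_esymm]
  · rw [deltaPlus, map_mul, map_add, hy, hz, AlgEquiv.commutes]
  · rw [deltaMinus, map_mul, map_sub, hy, hz, AlgEquiv.commutes]

/-- flip on exponents -/
def auxFlip {n : ℕ} (d : Fin n → Bool) : (Fin n →₀ ℤ) ≃+ (Fin n →₀ ℤ) where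
  toFun m := Finsupp.equivFunOnFinite.symm (fun i => if d i then - m i else m i)
  invFun m := Finsupp.equivFunOnFinite.symm (fun i => if d i then - m i else m i)
  left_inv m := by ext i; simp; split_ifs <;> simp
  right_inv m := by ext i; simp; split_ifs <;> simp
  map_add' a b := by ext i; simp; split_ifs <;> ring

/-- the group element -/
def auxG {n : ℕ} (σ : Equiv.Perm (Fin n)) (d : Fin n → Bool) :
    LaurentAlg n ≃ₐ[ℂ] LaurentAlg n :=
  AddMonoidAlgebra.domCongr ℂ ℂ ((auxFlip d).trans (Finsupp.domCongr σ))

theorem auxG_X {n : ℕ} (σ : Equiv.Perm (Fin n)) (d : Fin n → Bool) (j : Fin n) :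
    auxG σ d (Xvar j) = if d j then Xinv (σ j) else Xvar (σ j) := by
  have h : auxFlip d (Finsupp.single j 1) = Finsupp.single j (if d j then -1 else 1) := by
    ext i
    by_cases hij : j = i
    · subst hij; simp [auxFlip]
    · simp [auxFlip, Finsupp.single_apply, hij]
  rw [auxG, Xvar, AddMonoidAlgebra.domCongr_single, AddEquiv.trans_apply, h]
  rw [Finsupp.domCongr_apply, Finsupp.equivMapDomain_single]
  split_ifs <;> rfl

theorem aux_top (n : ℕ) :
    Algebra.adjoin ℂ (Set.range (fun i : Fin n => (Xvar i + Xinv i : LaurentAlg n)) ∪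
      Set.range (fun i : Fin n => (Xvar i - Xinv i : LaurentAlg n))) = ⊤ := by
  set S := Algebra.adjoin ℂ (Set.range (fun i : Fin n => (Xvar i + Xinv i : LaurentAlg n)) ∪
      Set.range (fun i : Fin n => (Xvar i - Xinv i : LaurentAlg n))) with hS
  have hy : ∀ i : Fin n, (Xvar i + Xinv i : LaurentAlg n) ∈ S := fun i =>
    Algebra.subset_adjoin (Or.inl ⟨i, rfl⟩)
  have hz : ∀ i : Fin n, (Xvar i - Xinv i : LaurentAlg n) ∈ S := fun i =>
    Algebra.subset_adjoin (Or.inr ⟨i, rfl⟩)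
  have hx : ∀ i : Fin n, (Xvar i : LaurentAlg n) ∈ S := fun i => by
    have := S.smul_mem (S.add_mem (hy i) (hz i)) (1/2 : ℂ)
    convert this using 1
    rw [show (Xvar i + Xinv i + (Xvar i - Xinv i) : LaurentAlg n) = (2:ℂ) • Xvar i by
      rw [two_smul]; ring, smul_smul]; norm_num
  have hxi : ∀ i : Fin n, (Xinv i : LaurentAlg n) ∈ S := fun i => by
    have := S.sub_mem (hy i) (hx i)
    simpa using this
  have hm : ∀ m : Fin n →₀ ℤ, (AddMonoidAlgebra.single m 1 : LaurentAlg n) ∈ S := by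
    intro m
    induction m using Finsupp.induction_linear with
    | zero => exact S.one_mem
    | add a b ha hb =>
      have := S.mul_mem ha hb
      rwa [AddMonoidAlgebra.single_mul_single, one_mul] at this
    | single i k =>
      induction k using Int.induction_on with
      | zero => rw [Finsupp.single_zero]; exact S.one_mem
      | succ k ih =>
        have := S.mul_mem ih (hx i)
        rwa [Xvar, AddMonoidAlgebra.single_mul_single, one_mul, ← Finsupp.single_add] at this
      | pred k ih =>
        have := S.mul_mem ih (hxi i)
        rwa [Xinv, AddMonoidAlgebra.single_mul_single, one_mul, ← Finsupp.single_add] at this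
  rw [eq_top_iff]
  rintro f -
  induction f using AddMonoidAlgebra.induction_on with
  | of m => exact hm _
  | add a b ha hb => exact S.add_mem ha hb
  | smul r a ha => exact S.smul_mem ha r

open MvPolynomial in
theorem aux_span {n : ℕ} (f : LaurentAlg n) :
    f ∈ Submodule.span ℂ {h : LaurentAlg n | ∃ (p : MvPolynomial (Fin n) ℂ) (b : Fin n → ℕ),
      h = aeval (fun i => (Xvar i + Xinv i : LaurentAlg n)) p *
        ∏ i, (Xvar i - Xinv i) ^ b i} := by
  have hf : f ∈ (⊤ : Subalgebra ℂ (LaurentAlg n)) := trivial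
  rw [← aux_top n, ← Subalgebra.mem_toSubmodule, Algebra.adjoin_eq_span] at hf
  refine Submodule.span_mono ?_ hf
  intro h hh
  induction hh using Submonoid.closure_induction with
  | mem x hx =>
    rcases hx with ⟨i, rfl⟩ | ⟨i, rfl⟩
    · exact ⟨X i, 0, by simp⟩
    · refine ⟨1, Pi.single i 1, ?_⟩
      rw [Finset.prod_eq_single i]
      · simp
      · intro j _ hj; simp [hj]
      · simp
  | one => exact ⟨1, 0, by simp⟩
  | mul x y _ _ hx hy =>
    obtain ⟨p, b, rfl⟩ := hx
    obtain ⟨q, c, rfl⟩ := hy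
    refine ⟨p * q, b + c, ?_⟩
    simp only [map_mul, Pi.add_apply, pow_add, Finset.prod_mul_distrib]
    ring

open MvPolynomial in
theorem aux_symm {n : ℕ} (p : MvPolynomial (Fin n) ℂ) (hp : p.IsSymmetric)
    (S : Subalgebra ℂ (LaurentAlg n))
    (hS : ∀ k, 1 ≤ k → k ≤ n → (sD k : LaurentAlg n) ∈ S) :
    aeval (fun i => (Xvar i + Xinv i : LaurentAlg n)) p ∈ S := by
  obtain ⟨q, hq⟩ := esymmAlgHom_fin_surjective (R := ℂ) (le_refl n) ⟨p, hp⟩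
  have h2 : p = aeval (fun i : Fin n ↦ esymm (Fin n) ℂ (i + 1)) q := by
    rw [← esymmAlgHom_apply, hq]
  rw [h2]
  clear hq h2
  induction q using MvPolynomial.induction_on with
  | C r => simpa using S.algebraMap_mem r
  | add a b ha hb => simpa using S.add_mem ha hb
  | mul_X a i ha =>
    rw [map_mul, map_mul, aeval_X, ← aux_sD]
    exact S.mul_mem ha (hS _ (by omega) (by omega))

theorem aux_kill {n : ℕ} (b : Fin n → ℕ) (i j : Fin n) (hi : Even (b i)) (hj : ¬ Even (b j)) :
    ∑ d ∈ Finset.univ.filter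
      (fun d : Fin n → Bool => Even (Finset.univ.filter (fun i => d i = true)).card),
      ∏ k, (if d k then (-1 : ℂ) else 1) ^ b k = 0 := by
  have hij : i ≠ j := by rintro rfl; exact hj hi
  let e : Fin n → Bool := fun k => decide (k = i) || decide (k = j)
  have hsg : ∀ d : Fin n → Bool, Even (Finset.univ.filter (fun i => d i = true)).card ↔
      ∏ i, (if d i then (-1 : ℂ) else 1) = 1 := by
    intro d
    rw [Finset.prod_ite]
    simp only [Finset.prod_const, one_pow, mul_one]
    exact (neg_one_pow_eq_one_iff_even (by norm_num)).symm
  have hx : ∀ d : Fin n → Bool, ∀ c : Fin n → ℕ,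
      ∏ k, (if (xor (d k) (e k)) then (-1 : ℂ) else 1) ^ c k =
      (∏ k, (if d k then (-1 : ℂ) else 1) ^ c k) * ((-1) ^ c i * (-1) ^ c j) := by
    intro d c
    have : ((-1 : ℂ) ^ c i * (-1) ^ c j) = ∏ k, (if e k then (-1 : ℂ) else 1) ^ c k := by
      rw [← Finset.prod_subset (Finset.subset_univ {i, j}), Finset.prod_pair hij]
      · simp [e]
      · intro x _ hx
        simp only [Finset.mem_insert, Finset.mem_singleton, not_or] at hx
        simp [e, hx]
    rw [this, ← Finset.prod_mul_distrib]
    refine Finset.prod_congr rfl fun k _ => ?_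
    rw [← mul_pow]
    cases d k <;> cases e k <;> simp
  refine Finset.sum_involution (fun d _ => fun k => xor (d k) (e k)) ?_ ?_ ?_ ?_
  · intro d _
    rw [hx, hi.neg_one_pow, (Nat.not_even_iff_odd.1 hj).neg_one_pow]
    ring
  · intro d _ _ h
    have := congrFun h i
    simp [e] at this
  · intro d hd
    simp only [Finset.mem_filter, Finset.mem_univ, true_and] at hd ⊢
    rw [hsg] at hd ⊢
    have := hx d (fun _ => 1)
    simp only [pow_one] at this
    rw [this, hd]; norm_num
  · intro d _
    funext k
    simp

open MvPolynomial in
theorem aux_Gh {n : ℕ} (σ : Equiv.Perm (Fin n)) (d : Fin n → Bool)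
    (p : MvPolynomial (Fin n) ℂ) (b : Fin n → ℕ) :
    auxG σ d (aeval (fun i => (Xvar i + Xinv i : LaurentAlg n)) p *
        ∏ i, (Xvar i - Xinv i) ^ b i) =
    (∏ k, (if d k then (-1 : ℂ) else 1) ^ b k) •
      (aeval (fun i => (Xvar i + Xinv i : LaurentAlg n)) (rename σ p) *
        ∏ i, (Xvar (σ i) - Xinv (σ i)) ^ b i) := by
  rw [map_mul, aux_gA σ d _ (auxG_X σ d), map_prod]
  simp_rw [map_pow, aux_gz σ d _ (auxG_X σ d), mul_pow]
  rw [Finset.prod_mul_distrib, Algebra.smul_def, map_prod]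
  simp_rw [map_pow]
  ring

theorem aux_zsq {n : ℕ} (i : Fin n) :
    (Xvar i - Xinv i : LaurentAlg n) ^ 2 = (Xvar i + Xinv i) ^ 2 - 4 := by
  have := aux_mul i
  linear_combination (-4) * this

open MvPolynomial in
theorem aux_par {n : ℕ} (p : MvPolynomial (Fin n) ℂ) (b : Fin n → ℕ) (r : ℕ)
    (hb : ∀ i, b i % 2 = r) (S : Subalgebra ℂ (LaurentAlg n))
    (hS : ∀ k, 1 ≤ k → k ≤ n → (sD k : LaurentAlg n) ∈ S)
    (hZ : ∏ i : Fin n, (Xvar i - Xinv i : LaurentAlg n) ∈ S) :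
    ∑ σ : Equiv.Perm (Fin n), (aeval (fun i => (Xvar i + Xinv i : LaurentAlg n)) (rename σ p) *
        ∏ i, (Xvar (σ i) - Xinv (σ i)) ^ b i) ∈ S := by
  let q : MvPolynomial (Fin n) ℂ := p * ∏ i, (X i ^ 2 - C 4) ^ (b i / 2)
  have key : ∀ σ : Equiv.Perm (Fin n),
      (aeval (fun i => (Xvar i + Xinv i : LaurentAlg n)) (rename σ p) *
        ∏ i, (Xvar (σ i) - Xinv (σ i)) ^ b i) =
      aeval (fun i => (Xvar i + Xinv i : LaurentAlg n)) (rename σ q) *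
        (∏ i : Fin n, (Xvar i - Xinv i : LaurentAlg n)) ^ r := by
    intro σ
    have h1 : ∀ i, (Xvar (σ i) - Xinv (σ i) : LaurentAlg n) ^ b i =
        ((Xvar (σ i) + Xinv (σ i)) ^ 2 - 4) ^ (b i / 2) * (Xvar (σ i) - Xinv (σ i)) ^ r := by
      intro i
      rw [← aux_zsq, ← pow_mul, ← pow_add, ← hb i, Nat.div_add_mod]
    simp_rw [h1]
    rw [Finset.prod_mul_distrib, Finset.prod_pow,
      Equiv.prod_comp σ (fun i => (Xvar i - Xinv i : LaurentAlg n)), ← mul_assoc]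
    congr 1
    simp only [q, map_mul, map_prod, map_pow, map_sub, rename_X, aeval_X, rename_C, aeval_C, map_ofNat]
  simp_rw [key]
  rw [← Finset.sum_mul, ← map_sum]
  refine S.mul_mem (aux_symm _ ?_ S hS) (S.pow_mem hZ r)
  intro τ
  rw [map_sum]
  simp_rw [rename_rename]
  exact Equiv.sum_comp (Equiv.mulLeft τ) (fun σ : Equiv.Perm (Fin n) => rename σ q)

theorem invariants_Dn (n : ℕ) (hn : 2 ≤ n) :
    {f : LaurentAlg n |
      ∀ (σ : Equiv.Perm (Fin n)) (d : Fin n → Bool),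
        Even (Finset.univ.filter (fun i => d i = true)).card →
        ∀ g : LaurentAlg n ≃ₐ[ℂ] LaurentAlg n,
          (∀ j, g (Xvar j) = if d j then Xinv (σ j) else Xvar (σ j)) → g f = f} =
    (Algebra.adjoin ℂ
        ((sD (n := n) '' Set.Icc 1 (n - 1)) ∪ {deltaPlus n, deltaMinus n}) :
      Set (LaurentAlg n)) := by
  set S := Algebra.adjoin ℂ
        ((sD (n := n) '' Set.Icc 1 (n - 1)) ∪ {deltaPlus n, deltaMinus n}) with hSdef
  have hP : deltaPlus n ∈ S := Algebra.subset_adjoin (by simp)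
  have hM : deltaMinus n ∈ S := Algebra.subset_adjoin (by simp)
  have h2 : algebraMap ℂ (LaurentAlg n) (1/2) * 2 = 1 := by
    rw [show (2 : LaurentAlg n) = algebraMap ℂ (LaurentAlg n) 2 from (map_ofNat _ 2).symm, ← map_mul]
    rw [show (1 / 2 * 2 : ℂ) = 1 by norm_num, map_one]
  have hZ : ∏ i : Fin n, (Xvar i - Xinv i : LaurentAlg n) ∈ S := by
    have := S.sub_mem hP hM
    convert this using 1
    rw [deltaPlus, deltaMinus]
    linear_combination (-∏ i : Fin n, (Xvar i - Xinv i : LaurentAlg n)) * h2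
  have hY : ∏ i : Fin n, (Xvar i + Xinv i : LaurentAlg n) ∈ S := by
    have := S.add_mem hP hM
    convert this using 1
    rw [deltaPlus, deltaMinus]
    linear_combination (-∏ i : Fin n, (Xvar i + Xinv i : LaurentAlg n)) * h2
  have hS : ∀ k, 1 ≤ k → k ≤ n → (sD k : LaurentAlg n) ∈ S := by
    intro k h1 h2
    rcases h2.lt_or_eq with h | h
    · exact Algebra.subset_adjoin (Or.inl ⟨k, ⟨h1, by omega⟩, rfl⟩)
    · subst h
      have : (sD k : LaurentAlg k) = ∏ i : Fin k, (Xvar i + Xinv i) := by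
        have hc : Finset.powersetCard k (Finset.univ : Finset (Fin k)) = {Finset.univ} := by
          have := Finset.powersetCard_self (Finset.univ : Finset (Fin k))
          rwa [Finset.card_univ, Fintype.card_fin] at this
        rw [sD, hc, Finset.sum_singleton]
      rw [this]; exact hY
  apply Set.Subset.antisymm
  · intro f hf
    let E := Finset.univ.filter
      (fun d : Fin n → Bool => Even (Finset.univ.filter (fun i => d i = true)).card)
    have hR : ∀ h : LaurentAlg n, ∑ σ : Equiv.Perm (Fin n), ∑ d ∈ E, auxG σ d h ∈ S := by
      intro h
      induction aux_span h using Submodule.span_induction with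
      | mem x hx =>
        obtain ⟨p, b, rfl⟩ := hx
        simp_rw [aux_Gh, ← Finset.sum_smul, ← Finset.smul_sum]
        by_cases hall : ∃ r, ∀ i, b i % 2 = r
        · obtain ⟨r, hr⟩ := hall
          exact S.smul_mem (aux_par p b r hr S hS hZ) _
        · have : ∃ i j, Even (b i) ∧ ¬ Even (b j) := by
            by_contra hcon
            push Not at hcon
            apply hall
            by_cases hex : ∃ i, Even (b i)
            · obtain ⟨i, hi⟩ := hex
              exact ⟨0, fun j => Nat.even_iff.1 (hcon i j hi)⟩
            · push Not at hex
              exact ⟨1, fun j => by simpa [Nat.odd_iff] using hex j⟩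
          obtain ⟨i, j, hi, hj⟩ := this
          rw [aux_kill b i j hi hj, zero_smul]
          exact S.zero_mem
      | zero => simp
      | add x y _ _ hx hy =>
        simp only [map_add, Finset.sum_add_distrib]
        exact S.add_mem hx hy
      | smul c x _ hx =>
        simp only [map_smul, ← Finset.smul_sum]
        exact S.smul_mem hx c
    have h1 : ∑ σ : Equiv.Perm (Fin n), ∑ d ∈ E, auxG σ d f =
        ((Fintype.card (Equiv.Perm (Fin n)) * E.card : ℕ) : ℂ) • f := by
      rw [Finset.sum_congr rfl (fun σ _ => Finset.sum_congr rfl (fun d hd =>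
        hf σ d (Finset.mem_filter.1 hd).2 _ (auxG_X σ d)))]
      rw [Nat.cast_smul_eq_nsmul]
      rw [Finset.sum_const, Finset.sum_const, Finset.card_univ, mul_smul]
    have hE : E.card ≠ 0 := by
      apply Finset.card_ne_zero_of_mem (a := fun _ => false)
      simp [E]
    have hN : ((Fintype.card (Equiv.Perm (Fin n)) * E.card : ℕ) : ℂ) ≠ 0 :=
      Nat.cast_ne_zero.2 (Nat.mul_ne_zero Fintype.card_ne_zero hE)
    have h3 := S.smul_mem (hR f) ((Fintype.card (Equiv.Perm (Fin n)) * E.card : ℕ) : ℂ)⁻¹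
    rwa [h1, smul_smul, inv_mul_cancel₀ hN, one_smul] at h3
  · intro f hf σ d hd g hg
    obtain ⟨k1, k2, k3⟩ := aux_fix σ d hd g hg
    have : S ≤ AlgHom.equalizer (g : LaurentAlg n →ₐ[ℂ] LaurentAlg n) (AlgHom.id ℂ _) := by
      apply Algebra.adjoin_le
      rintro x (⟨k, _, rfl⟩ | rfl | rfl)
      · exact k1 k
      · exact k2
      · exact k3
    exact this hf

end
end

section
/- Let n ≥ 2 and let the group D_n (semidirect product of S_n with the even sign vectors in (ℤ/2ℤ)^n) act on the complex torus (ℂ^×)^n by: a permutation σ ∈ S_n sends (v_1,…,v_n) to (v_{σ^{-1}(1)},…,v_{σ^{-1}(n)}), and a sign vector (d_1,…,d_n) with Σd_i even sends v_i to v_i^{-1} exactly when d_i = 1. Let U be the set of points v ∈ (ℂ^×)^n such that v_i²·v_j² ≠ 1 for all 1 ≤ i ≤ j ≤ n and v_i² ≠ v_j² for all 1 ≤ i < j ≤ n. Then U is stable under the action of D_n, and the action of D_n on U is free: if g ∈ D_n and v ∈ U satisfy g·v = v, then g is the identity. -/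
/-- The group `Dₙ` (semidirect product of `Sₙ` with the even sign vectors in `(ℤ/2ℤ)ⁿ`)
acts on the complex torus `(ℂ^×)ⁿ`: the element with even sign vector `d` and permutation
`σ` sends `v` to the point whose `i`-th coordinate is `(v_{σ⁻¹ i})⁻¹` if `d i` holds and
`v_{σ⁻¹ i}` otherwise.  The subset `U` of points with `vᵢ²·vⱼ² ≠ 1` for `i ≤ j` and
`vᵢ² ≠ vⱼ²` for `i < j` is stable under this action, and the action of `Dₙ` on `U` is
free. -/
theorem Dn_free_on_U (n : ℕ) (hn : 2 ≤ n)
    (U : Set (Fin n → ℂˣ))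
    (hU : U = {v | (∀ i j : Fin n, i ≤ j → ((v i : ℂ)) ^ 2 * ((v j : ℂ)) ^ 2 ≠ 1) ∧
                   (∀ i j : Fin n, i < j → ((v i : ℂ)) ^ 2 ≠ ((v j : ℂ)) ^ 2)})
    (act : (Fin n → Bool) → Equiv.Perm (Fin n) → (Fin n → ℂˣ) → (Fin n → ℂˣ))
    (hact : ∀ d σ v i, act d σ v i = if d i then (v (σ⁻¹ i))⁻¹ else v (σ⁻¹ i)) :
    (∀ (d : Fin n → Bool) (σ : Equiv.Perm (Fin n)),
        Even (Finset.univ.filter (fun i => d i = true)).card →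
        ∀ v ∈ U, act d σ v ∈ U) ∧
    (∀ (d : Fin n → Bool) (σ : Equiv.Perm (Fin n)),
        Even (Finset.univ.filter (fun i => d i = true)).card →
        ∀ v ∈ U, act d σ v = v → d = (fun _ => false) ∧ σ = 1) := by
  have key : ∀ v : Fin n → ℂˣ, v ∈ U ↔
      (∀ i j, v i ^ 2 * v j ^ 2 ≠ 1) ∧ (∀ i j, i ≠ j → v i ^ 2 ≠ v j ^ 2) := by
    intro v
    have e1 : ∀ i j, ((v i : ℂ)) ^ 2 * ((v j : ℂ)) ^ 2 = 1 ↔ v i ^ 2 * v j ^ 2 = 1 := by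
      intro i j
      rw [Units.ext_iff]
      push_cast
      rfl
    have e2 : ∀ i j, ((v i : ℂ)) ^ 2 = ((v j : ℂ)) ^ 2 ↔ v i ^ 2 = v j ^ 2 := by
      intro i j
      rw [Units.ext_iff]
      push_cast
      rfl
    rw [hU, Set.mem_setOf_eq]
    simp only [ne_eq, e1, e2]
    constructor
    · rintro ⟨h1, h2⟩
      refine ⟨fun i j => ?_, fun i j hij => ?_⟩
      · rcases le_total i j with h | h
        · exact h1 i j h
        · rw [mul_comm]
          exact h1 j i h
      · rcases lt_or_gt_of_ne hij with h | h
        · exact h2 i j h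
        · exact fun h' => h2 j i h h'.symm
    · rintro ⟨h1, h2⟩
      exact ⟨fun i j _ => h1 i j, fun i j h => h2 i j h.ne⟩
  refine ⟨fun d σ _ v hv => ?_, fun d σ _ v hv hfix => ?_⟩
  · rw [key] at hv ⊢
    obtain ⟨h1, h2⟩ := hv
    refine ⟨fun i j => ?_, fun i j hij => ?_⟩
    · have h3 := h1 (σ⁻¹ i) (σ⁻¹ j)
      by_cases hij : i = j
      · subst hij
        rw [hact]
        split_ifs
        · rw [inv_pow, ← mul_inv, ne_eq, inv_eq_one]
          exact h3
        · exact h3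
      · have h4 := h2 (σ⁻¹ i) (σ⁻¹ j) (fun h => hij (σ⁻¹.injective h))
        rw [hact, hact]
        split_ifs
        · rw [inv_pow, inv_pow, ← mul_inv, ne_eq, inv_eq_one]
          exact h3
        · rw [inv_pow, ne_eq, inv_mul_eq_one]
          exact h4
        · rw [inv_pow, ne_eq, mul_inv_eq_one]
          exact h4
        · exact h3
    · have h3 := h1 (σ⁻¹ i) (σ⁻¹ j)
      have h4 := h2 (σ⁻¹ i) (σ⁻¹ j) (fun h => hij (σ⁻¹.injective h))
      rw [hact, hact]
      split_ifs
      · rw [inv_pow, inv_pow, ne_eq, inv_inj]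
        exact h4
      · rw [inv_pow, ne_eq, inv_eq_iff_mul_eq_one]
        exact h3
      · rw [inv_pow, ne_eq, ← mul_eq_one_iff_eq_inv]
        exact h3
      · exact h4
  · rw [key] at hv
    obtain ⟨h1, h2⟩ := hv
    have hd : ∀ i, d i = false := by
      intro i
      by_contra h
      have h3 := congrFun hfix i
      rw [hact, if_pos (by simpa using h)] at h3
      apply h1 (σ⁻¹ i) i
      rw [← h3]
      simp
    have hs : ∀ i, σ⁻¹ i = i := by
      intro i
      by_contra h
      have h3 := congrFun hfix i
      rw [hact, hd i] at h3
      apply h2 (σ⁻¹ i) i h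
      simpa using congrArg (· ^ 2) h3
    refine ⟨funext hd, ?_⟩
    rw [← inv_eq_one]
    exact Equiv.ext hs
end
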